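/- Let δ > 0 and let u ∈ C²(S² ∩ B_δ(S) \ {S}) be a (−1)-homogeneous axisymmetric solution of the stationary Navier–Stokes equations, and let τ := lim_{x∈S², x→S} |x'| u_θ(x) (which exists and is finite). If τ ≥ 3, then the function |x'| u_φ is constant on S² near S, and there exist functions g₁, g₂, real analytic in a neighborhood of 0 ∈ ℝ, such that |x'| u_θ(x) = g₁(1 + cosθ) and u_r(x) = g₂(1 + cosθ) for all x ∈ S² near S. -/

import Mathlib

noncomputable section

open Real Filter MeasureTheory Metric Topology
open scoped ENNReal InnerProductSpace

abbrev V3 := EuclideanSpace ℝ (Fin 3)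
abbrev V2 := EuclideanSpace ℝ (Fin 2)

/-- standard basis vector in `ℝ³` -/
def e3 (j : Fin 3) : V3 := EuclideanSpace.single j 1

/-- partial derivative `∂_j f` -/
def pd (j : Fin 3) (f : V3 → ℝ) (x : V3) : ℝ := fderiv ℝ f x (e3 j)

/-- Laplacian on `ℝ³` -/
def lap3 (f : V3 → ℝ) (x : V3) : ℝ := ∑ j, pd j (fun y => pd j f y) x

/-- stationary Navier–Stokes equations `-Δu + (u·∇)u + ∇p = 0`, `div u = 0` at `x` -/
def NSEq (u : V3 → V3) (p : V3 → ℝ) (x : V3) : Prop :=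
  (∀ i, - lap3 (fun z => u z i) x + (∑ j, u x j * pd j (fun z => u z i) x) + pd i p x = 0)
  ∧ (∑ j, pd j (fun z => u z j) x) = 0

/-- stationary Euler equations `(u·∇)u + ∇p = 0`, `div u = 0` at `x` -/
def EulerEq (u : V3 → V3) (p : V3 → ℝ) (x : V3) : Prop :=
  (∀ i, (∑ j, u x j * pd j (fun z => u z i) x) + pd i p x = 0)
  ∧ (∑ j, pd j (fun z => u z j) x) = 0

/-- south pole -/
def S3 : V3 := EuclideanSpace.single 2 (-1)
/-- north pole -/
def N3 : V3 := EuclideanSpace.single 2 1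

/-- the unit sphere `S²` -/
def sphere2 : Set V3 := Metric.sphere (0 : V3) 1

/-- the open cone over a subset of the unit sphere -/
def cone3 (Ω : Set V3) : Set V3 := {x : V3 | x ≠ 0 ∧ (‖x‖⁻¹ • x) ∈ Ω}

/-- `|x'| = √(x₁² + x₂²)` -/
def rho (x : V3) : ℝ := Real.sqrt ((x 0) ^ 2 + (x 1) ^ 2)

/-- the `x₃`-axis `{x' = 0}` -/
def axis3 : Set V3 := {x : V3 | x 0 = 0 ∧ x 1 = 0}

/-- `Ω_{a,b,R} = {a < x₃ < b, |x'| < R}` -/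
def OmegaR (a b R : ℝ) : Set V3 := {x : V3 | a < x 2 ∧ x 2 < b ∧ rho x < R}

/-- build a point of `ℝ³` from `x' ∈ ℝ²` and `x₃ ∈ ℝ` -/
def emb (y : V2) (t : ℝ) : V3 := (EuclideanSpace.equiv (Fin 3) ℝ).symm ![y 0, y 1, t]

/-- spherical component `u_r = u · e_r` -/
def uRc (u : V3 → V3) (x : V3) : ℝ := (u x 0 * x 0 + u x 1 * x 1 + u x 2 * x 2) / ‖x‖

/-- spherical component `u_θ = u · e_θ` -/
def uTc (u : V3 → V3) (x : V3) : ℝ :=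
  (u x 0 * x 0 * x 2 + u x 1 * x 1 * x 2) / (‖x‖ * rho x) - u x 2 * rho x / ‖x‖

/-- spherical component `u_φ = u · e_φ` -/
def uPc (u : V3 → V3) (x : V3) : ℝ := (-(u x 0) * x 1 + u x 1 * x 0) / rho x

/-- axisymmetry on a set: the spherical components are independent of the meridian angle -/
def AxisymOn (u : V3 → V3) (Ω : Set V3) : Prop :=
  ∀ x ∈ Ω, ∀ y ∈ Ω, ‖x‖ = ‖y‖ → x 2 = y 2 →
    uRc u x = uRc u y ∧ uTc u x = uTc u y ∧ uPc u x = uPc u y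

/-- spherical frame vector `e_r` -/
def eRv (x : V3) : V3 := ‖x‖⁻¹ • x

/-- spherical frame vector `e_θ` -/
def eThv (x : V3) : V3 := (EuclideanSpace.equiv (Fin 3) ℝ).symm
  ![x 2 * x 0 / (‖x‖ * rho x), x 2 * x 1 / (‖x‖ * rho x), -(rho x) / ‖x‖]

/-- spherical frame vector `e_φ` -/
def ePhv (x : V3) : V3 := (EuclideanSpace.equiv (Fin 3) ℝ).symm ![-(x 1) / rho x, x 0 / rho x, 0]

/-- the spherical cap `S² ∩ B_δ(S) \ {S}` -/
def NSCap (δ : ℝ) : Set V3 := (sphere2 ∩ Metric.ball S3 δ) \ {S3}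

/-- the spherical cap `S² ∩ B_δ(S)` -/
def NSCapFull (δ : ℝ) : Set V3 := sphere2 ∩ Metric.ball S3 δ

/-!
In the variable `s = 1 + cos θ` the equations reduce to ordinary differential equations for the
profiles `U = |x'| u_θ` and `W = |x'| u_φ`, with `u_r = U'`. Following Slezkin, set
`F = s (2 - s) U' + 2 (s - 1) U + U² / 2`; then `F''' = -2 W W' / (s (2 - s))` and
`s (2 - s) W'' + U W' = 0`.

If `W'` does not vanish near `s = 0`, it has a constant sign there, and since `U → τ ≥ 3` Abel's
identity gives first `|W'| ≳ s⁻¹` and then, after a lower bound on `U`, `|W'| ≳ s ^ (-3/2)`. This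
forces `F''' ≳ s⁻³`, hence `F → -∞`, which is incompatible with the convergence of `U`.

So `W` is constant and `F` is a quadratic polynomial. This Riccati equation for `U` linearises to an
equation with a regular singular point, whose Frobenius series gives a solution that is analytic at
`s = 0` and has the same limit `τ`; solutions with a limit `τ > 2` are unique.
-/

/-! ### Functions of one variable to the right of a point -/

section RightOfPoint

variable {g g' h h' : ℝ → ℝ} {a : ℝ}

theorem exists_monotoneOn_Ioc_of_deriv_nonneg
    (hg : ∀ᶠ s in 𝓝[>] a, HasDerivAt g (g' s) s) (hg' : ∀ᶠ s in 𝓝[>] a, 0 ≤ g' s) :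
    ∃ b > a, MonotoneOn g (Set.Ioc a b) := by
  obtain ⟨b, hab, hb⟩ := mem_nhdsGT_iff_exists_Ioc_subset.1 (hg.and hg')
  refine ⟨b, hab, monotoneOn_of_hasDerivWithinAt_nonneg (convex_Ioc a b)
    (fun s hs => (hb hs).1.continuousAt.continuousWithinAt)
    (fun s hs => (hb (interior_subset hs)).1.hasDerivWithinAt)
    (fun s hs => (hb (interior_subset hs)).2)⟩

theorem exists_eventually_le_of_deriv_nonneg
    (hg : ∀ᶠ s in 𝓝[>] a, HasDerivAt g (g' s) s) (hg' : ∀ᶠ s in 𝓝[>] a, 0 ≤ g' s) :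
    ∃ C, ∀ᶠ s in 𝓝[>] a, g s ≤ C := by
  obtain ⟨b, hab, hmono⟩ := exists_monotoneOn_Ioc_of_deriv_nonneg hg hg'
  refine ⟨g b, ?_⟩
  filter_upwards [Ioc_mem_nhdsGT hab] with s hs
  exact hmono hs (Set.right_mem_Ioc.2 hab) hs.2

theorem tendsto_atBot_of_deriv_le
    (hg : ∀ᶠ s in 𝓝[>] a, HasDerivAt g (g' s) s) (hh : ∀ᶠ s in 𝓝[>] a, HasDerivAt h (h' s) s)
    (hle : ∀ᶠ s in 𝓝[>] a, h' s ≤ g' s) (hbot : Tendsto h (𝓝[>] a) atBot) :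
    Tendsto g (𝓝[>] a) atBot := by
  obtain ⟨C, hC⟩ := exists_eventually_le_of_deriv_nonneg
    (hg.and hh |>.mono fun s hs => hs.1.sub hs.2) (hle.mono fun s hs => sub_nonneg.2 hs)
  refine tendsto_atBot_mono' _ ?_ (tendsto_atBot_add_const_right _ C hbot)
  filter_upwards [hC] with s hs
  exact sub_le_iff_le_add'.1 hs

theorem exists_eventually_eq_const_of_deriv_eq_zero
    (hg : ∀ᶠ s in 𝓝[>] a, HasDerivAt g 0 s) : ∃ c, ∀ᶠ s in 𝓝[>] a, g s = c := by
  obtain ⟨b, hab, hmono⟩ := exists_monotoneOn_Ioc_of_deriv_nonneg hg (.of_forall fun _ => le_rfl)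
  obtain ⟨d, had, hanti⟩ := exists_monotoneOn_Ioc_of_deriv_nonneg
    (hg.mono fun s hs => hs.neg) (.of_forall fun _ => neg_zero.ge)
  have hm : min b d ∈ Set.Ioc a b ∩ Set.Ioc a d :=
    ⟨⟨lt_min hab had, min_le_left _ _⟩, ⟨lt_min hab had, min_le_right _ _⟩⟩
  refine ⟨g (min b d), ?_⟩
  filter_upwards [Ioc_mem_nhdsGT (lt_min hab had)] with s hs
  exact le_antisymm (hmono ⟨hs.1, hs.2.trans hm.1.2⟩ hm.1 hs.2)
    (neg_le_neg_iff.1 (hanti ⟨hs.1, hs.2.trans hm.2.2⟩ hm.2 hs.2))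

theorem eventually_nonneg_of_deriv_nonneg_of_tendsto_zero
    (hg : ∀ᶠ s in 𝓝[>] a, HasDerivAt g (g' s) s) (hg' : ∀ᶠ s in 𝓝[>] a, 0 ≤ g' s)
    (hlim : Tendsto g (𝓝[>] a) (𝓝 0)) : ∀ᶠ s in 𝓝[>] a, 0 ≤ g s := by
  obtain ⟨b, hab, hmono⟩ := exists_monotoneOn_Ioc_of_deriv_nonneg hg hg'
  filter_upwards [Ioc_mem_nhdsGT hab] with s hs
  refine le_of_tendsto hlim ?_
  filter_upwards [Ioc_mem_nhdsGT hs.1] with t ht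
  exact hmono ⟨ht.1, ht.2.trans hs.2⟩ hs ht.2

theorem hasDerivAt_min_zero_sq (z : ℝ) :
    HasDerivAt (fun y : ℝ => min y 0 ^ 2) (2 * min z 0) z := by
  rcases lt_trichotomy z 0 with hz | rfl | hz
  · rw [min_eq_left hz.le]
    have hsq : HasDerivAt (· ^ 2) (2 * z) z := by simpa using hasDerivAt_pow 2 z
    refine hsq.congr_of_eventuallyEq ?_
    filter_upwards [Iio_mem_nhds hz] with y hy
    rw [min_eq_left (Set.mem_Iio.1 hy).le]
  · have hO : (fun y : ℝ => min y 0 ^ 2) =O[𝓝 0] fun y => ‖y - 0‖ ^ 2 := by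
      refine .of_bound 1 (.of_forall fun y => ?_)
      rcases le_total y 0 with hy | hy <;> simp [hy]
    simpa using (hO.hasFDerivAt one_lt_two).hasDerivAt
  · rw [min_eq_right hz.le, mul_zero]
    refine (hasDerivAt_const z (0 : ℝ)).congr_of_eventuallyEq ?_
    filter_upwards [Ioi_mem_nhds hz] with y hy
    rw [min_eq_right (Set.mem_Ioi.1 hy).le, zero_pow two_ne_zero]

-- The square of the negative part of `g` decreases to the right of `a` and tends to `0` at `a`.
theorem eventually_nonneg_of_deriv_nonneg_of_neg
    (hg : ∀ᶠ s in 𝓝[>] a, HasDerivAt g (g' s) s) (hg' : ∀ᶠ s in 𝓝[>] a, g s < 0 → 0 ≤ g' s)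
    (hlim : Tendsto g (𝓝[>] a) (𝓝 0)) : ∀ᶠ s in 𝓝[>] a, 0 ≤ g s := by
  have hlim' : Tendsto (fun s => -min (g s) 0 ^ 2) (𝓝[>] a) (𝓝 0) := by
    simpa using ((hlim.min (tendsto_const_nhds (x := (0 : ℝ)))).pow 2).neg
  have hnonneg : ∀ᶠ s in 𝓝[>] a, 0 ≤ -min (g s) 0 ^ 2 :=
    eventually_nonneg_of_deriv_nonneg_of_tendsto_zero
      (hg.mono fun s hs => ((hasDerivAt_min_zero_sq (g s)).comp s hs).neg)
      (hg'.mono fun s hs => ?_) hlim'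
  · filter_upwards [hnonneg] with s hs
    have hsq : min (g s) 0 ^ 2 = 0 := (neg_nonneg.1 hs).antisymm (sq_nonneg _)
    exact min_eq_right_iff.1 (pow_eq_zero_iff two_ne_zero |>.1 hsq)
  · rcases lt_or_ge (g s) 0 with hneg | hpos
    · rw [min_eq_left hneg.le]
      nlinarith [hs hneg]
    · simp [hpos]

theorem exists_eventually_eq_quadratic {G₀ G₁ G₂ : ℝ → ℝ}
    (h₀ : ∀ᶠ s in 𝓝[>] a, HasDerivAt G₀ (G₁ s) s) (h₁ : ∀ᶠ s in 𝓝[>] a, HasDerivAt G₁ (G₂ s) s)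
    (h₂ : ∀ᶠ s in 𝓝[>] a, HasDerivAt G₂ 0 s) :
    ∃ c₀ c₁ c₂, ∀ᶠ s in 𝓝[>] a, G₀ s = c₀ + c₁ * s + c₂ * s ^ 2 := by
  obtain ⟨c₂, hc₂⟩ := exists_eventually_eq_const_of_deriv_eq_zero h₂
  obtain ⟨c₁, hc₁⟩ := exists_eventually_eq_const_of_deriv_eq_zero
      (g := fun s => G₁ s - c₂ * s) <| by
    filter_upwards [h₁, hc₂] with s hs hs₂
    exact (hs.sub ((hasDerivAt_id s).const_mul c₂)).congr_deriv (by rw [hs₂, mul_one, sub_self])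
  obtain ⟨c₀, hc₀⟩ := exists_eventually_eq_const_of_deriv_eq_zero
      (g := fun s => G₀ s - c₁ * s - c₂ / 2 * s ^ 2) <| by
    filter_upwards [h₀, hc₁] with s hs hs₁
    refine ((hs.sub ((hasDerivAt_id s).const_mul c₁)).sub
      ((hasDerivAt_pow 2 s).const_mul (c₂ / 2))).congr_deriv ?_
    linear_combination hs₁
  refine ⟨c₀, c₁, c₂ / 2, ?_⟩
  filter_upwards [hc₀] with s hs
  linear_combination hs

theorem exists_monotoneOn_add_linear {G₀ G₁ G₂ G₃ : ℝ → ℝ}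
    (h₀ : ∀ᶠ s in 𝓝[>] a, HasDerivAt G₀ (G₁ s) s) (h₁ : ∀ᶠ s in 𝓝[>] a, HasDerivAt G₁ (G₂ s) s)
    (h₂ : ∀ᶠ s in 𝓝[>] a, HasDerivAt G₂ (G₃ s) s) (h₃ : ∀ᶠ s in 𝓝[>] a, 0 ≤ G₃ s) :
    ∃ K, 0 ≤ K ∧ ∃ b > a, MonotoneOn (fun s => G₀ s + K * s) (Set.Ioc a b) := by
  obtain ⟨C₂, hC₂⟩ := exists_eventually_le_of_deriv_nonneg h₂ h₃
  obtain ⟨C₁, hC₁⟩ := exists_eventually_le_of_deriv_nonneg (g := fun s => C₂ * s - G₁ s)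
    (h₁.mono fun s hs => ((hasDerivAt_id s).const_mul C₂).sub hs)
    (hC₂.mono fun s hs => by linarith)
  have hbdd : ∀ᶠ s in 𝓝[>] a, C₂ * a - 1 < C₂ * s :=
    ((continuous_const.mul continuous_id).tendsto' a _ rfl).mono_left nhdsWithin_le_nhds
      |>.eventually (lt_mem_nhds (sub_one_lt _))
  refine ⟨|C₁ - C₂ * a + 1|, abs_nonneg _, exists_monotoneOn_Ioc_of_deriv_nonneg
    (h₀.mono fun s hs => hs.add ((hasDerivAt_id s).const_mul _)) ?_⟩
  filter_upwards [hC₁, hbdd] with s hs₁ hs₂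
  linarith [le_abs_self (C₁ - C₂ * a + 1)]

end RightOfPoint

theorem eventually_nhdsGT_eventually_nhds {P : ℝ → Prop} {a : ℝ} (h : ∀ᶠ s in 𝓝[>] a, P s) :
    ∀ᶠ s in 𝓝[>] a, ∀ᶠ t in 𝓝 s, P t := by
  filter_upwards [eventually_eventually_nhdsWithin.2 h, eventually_mem_nhdsWithin] with s hs hmem
  rwa [isOpen_Ioi.nhdsWithin_eq hmem] at hs

section LogComparison

variable {U U' : ℝ → ℝ} {τ : ℝ}

-- Otherwise `U` would be bounded below by a negative multiple of `log`.
theorem frequently_neg_lt_mul_deriv (hU : ∀ᶠ s in 𝓝[>] 0, HasDerivAt U (U' s) s)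
    (hlim : Tendsto U (𝓝[>] 0) (𝓝 τ)) {c : ℝ} (hc : 0 < c) :
    ∃ᶠ s in 𝓝[>] 0, -c < s * U' s := by
  intro hnot
  refine not_tendsto_nhds_of_tendsto_atBot ?_ (-τ) hlim.neg
  refine tendsto_atBot_of_deriv_le (h := fun s => c * log s) (hU.mono fun s hs => hs.neg)
    (eventually_mem_nhdsWithin.mono fun s hs => (hasDerivAt_log hs.ne').const_mul c) ?_
    (tendsto_log_nhdsGT_zero.const_mul_atBot hc)
  filter_upwards [hnot, eventually_mem_nhdsWithin] with s hle hs
  rw [← div_eq_mul_inv, div_le_iff₀ hs]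
  linarith

theorem eq_zero_of_tendsto_mul_deriv (hU : ∀ᶠ s in 𝓝[>] 0, HasDerivAt U (U' s) s)
    (hlim : Tendsto U (𝓝[>] 0) (𝓝 τ)) {l : ℝ}
    (hl : Tendsto (fun s => s * U' s) (𝓝[>] 0) (𝓝 l)) : l = 0 := by
  rcases lt_trichotomy l 0 with hneg | rfl | hpos
  · obtain ⟨s, hs, hs'⟩ := ((frequently_neg_lt_mul_deriv hU hlim
      (c := -l / 2) (by linarith)).and_eventually
      (hl.eventually (gt_mem_nhds (show l < l / 2 by linarith)))).exists
    linarith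
  · rfl
  · obtain ⟨s, hs, hs'⟩ := ((frequently_neg_lt_mul_deriv (hU.mono fun s hs => hs.neg) hlim.neg
      (half_pos hpos)).and_eventually (hl.eventually (lt_mem_nhds (half_lt_self hpos)))).exists
    linarith

theorem eventually_le_of_monotoneOn_add_linear {G : ℝ → ℝ} {K b L : ℝ} (hK : 0 ≤ K) (hb : 0 < b)
    (hmono : MonotoneOn (fun s => G s + K * s) (Set.Ioc 0 b))
    (hL : ∀ y < L, ∃ᶠ s in 𝓝[>] 0, y < G s) : ∀ᶠ s in 𝓝[>] 0, L - K * s ≤ G s := by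
  filter_upwards [Ioc_mem_nhdsGT hb] with s hs
  suffices L ≤ G s + K * s by linarith
  refine le_of_forall_lt fun y hy => ?_
  obtain ⟨t, hty, ht⟩ := ((hL y hy).and_eventually (Ioc_mem_nhdsGT hs.1)).exists
  have := hmono ⟨ht.1, ht.2.trans hs.2⟩ hs ht.2
  have := mul_nonneg hK ht.1.le
  dsimp only at *
  linarith

theorem tendsto_atBot_of_le_third_deriv {G₀ G₁ G₂ G₃ : ℝ → ℝ}
    (h₀ : ∀ᶠ s in 𝓝[>] 0, HasDerivAt G₀ (G₁ s) s) (h₁ : ∀ᶠ s in 𝓝[>] 0, HasDerivAt G₁ (G₂ s) s)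
    (h₂ : ∀ᶠ s in 𝓝[>] 0, HasDerivAt G₂ (G₃ s) s) {c : ℝ} (hc : 0 < c)
    (h₃ : ∀ᶠ s in 𝓝[>] 0, c / s ^ 3 ≤ G₃ s) : Tendsto G₀ (𝓝[>] 0) atBot := by
  have hpos : ∀ᶠ s : ℝ in 𝓝[>] 0, 0 < s := eventually_mem_nhdsWithin
  obtain ⟨K, hK, b, hb, hmono⟩ := exists_monotoneOn_add_linear
    (G₀ := fun s => G₀ s - c / 2 * log s) (G₁ := fun s => G₁ s - c / 2 * s⁻¹)
    (G₂ := fun s => G₂ s - c / 2 * (-(s ^ 2)⁻¹)) (G₃ := fun s => G₃ s - c / s ^ 3)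
    (h₀.and hpos |>.mono fun s hs => hs.1.sub ((hasDerivAt_log hs.2.ne').const_mul _))
    (h₁.and hpos |>.mono fun s hs => hs.1.sub ((hasDerivAt_inv hs.2.ne').const_mul _))
    (h₂.and hpos |>.mono fun s hs => by
      have hs0 := hs.2.ne'
      have hinv := (hasDerivAt_pow 2 s).inv (pow_ne_zero 2 hs0)
      refine (hs.1.sub (hinv.neg.const_mul _)).congr_deriv ?_
      field_simp
      ring)
    (h₃.mono fun s hs => sub_nonneg.2 hs)
  have hlog : Tendsto (fun s => c / 2 * log s + (G₀ b - c / 2 * log b + K * b)) (𝓝[>] 0) atBot :=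
    tendsto_atBot_add_const_right _ _ (tendsto_log_nhdsGT_zero.const_mul_atBot (half_pos hc))
  refine tendsto_atBot_mono' _ ?_ hlog
  filter_upwards [Ioc_mem_nhdsGT hb] with s hs
  have := hmono hs (Set.right_mem_Ioc.2 hb) hs.2
  have := mul_nonneg hK hs.1.le
  dsimp only at *
  linarith

end LogComparison

/-! ### Frobenius series -/

section PowerSeries

variable {a : ℕ → ℝ}

theorem exists_geometric_bound_of_recurrence {A B : ℝ}
    (h : ∀ n, |a (n + 2)| ≤ A * |a (n + 1)| + B * |a n|) :
    ∃ C R, 0 < R ∧ ∀ n, |a n| ≤ C * R ^ n := by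
  set C := |a 0| + |a 1|
  set R := 1 + |A| + |B|
  have hC : 0 ≤ C := by positivity
  have hR : 1 ≤ R := by simp only [R]; linarith [abs_nonneg A, abs_nonneg B]
  refine ⟨C, R, by positivity, fun n => ?_⟩
  induction n using Nat.twoStepInduction with
  | zero => simp [C]
  | one => nlinarith [abs_nonneg (a 0), abs_nonneg (a 1), pow_one R]
  | more n ih₀ ih₁ =>
    have hstep : C * R ^ n ≤ C * R ^ (n + 1) := by gcongr; exact n.le_succ
    calc |a (n + 2)| ≤ A * |a (n + 1)| + B * |a n| := h n
      _ ≤ |A| * (C * R ^ (n + 1)) + |B| * (C * R ^ (n + 1)) := by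
        gcongr
        exacts [le_abs_self A, le_abs_self B, ih₀.trans hstep]
      _ ≤ R * (C * R ^ (n + 1)) := by
        rw [← add_mul]
        gcongr
        simp only [R]
        linarith
      _ = C * R ^ (n + 2) := by ring

theorem exists_analyticAt_hasSum_of_geometric_bound {C R : ℝ} (hR : 0 < R)
    (ha : ∀ n, |a n| ≤ C * R ^ n) :
    ∃ f : ℝ → ℝ, AnalyticAt ℝ f 0 ∧ ∀ᶠ s in 𝓝 0, HasSum (fun n => a n * s ^ n) (f s) := by
  set p := FormalMultilinearSeries.ofScalars ℝ a
  have hr : ((R.toNNReal⁻¹ : NNReal) : ℝ≥0∞) ≤ p.radius :=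
    p.le_radius_of_bound C fun n => by
      rw [FormalMultilinearSeries.ofScalars_norm, NNReal.coe_inv, Real.coe_toNNReal _ hR.le,
        inv_pow, ← div_eq_mul_inv, div_le_iff₀ (pow_pos hR n)]
      exact ha n
  have hr₀ : 0 < p.radius :=
    (ENNReal.coe_pos.2 (inv_pos.2 (Real.toNNReal_pos.2 hR))).trans_le hr
  have hp := (p.hasFPowerSeriesOnBall hr₀).hasFPowerSeriesAt
  refine ⟨p.sum, hp.analyticAt, ?_⟩
  filter_upwards [hasFPowerSeriesAt_iff.1 hp] with s hs
  simpa [p, mul_comm] using hs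

theorem eventually_hasSum_mul_deriv {f : ℝ → ℝ}
    (hf : ∀ᶠ s in 𝓝 0, HasSum (fun n => a n * s ^ n) (f s)) :
    ∀ᶠ s in 𝓝 0, HasSum (fun n => n * a n * s ^ n) (s * deriv f s) := by
  have hp : HasFPowerSeriesAt f (FormalMultilinearSeries.ofScalars ℝ a) 0 :=
    hasFPowerSeriesAt_iff.2 (hf.mono fun s hs => by simpa [mul_comm] using hs)
  obtain ⟨r, hr⟩ := hp
  have hderiv : HasFPowerSeriesAt (deriv f) _ 0 :=
    ((ContinuousLinearMap.apply ℝ ℝ (1 : ℝ)).comp_hasFPowerSeriesOnBall hr.fderiv).hasFPowerSeriesAt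
  filter_upwards [hasFPowerSeriesAt_iff.1 hderiv] with s hs
  rw [← hasSum_nat_add_iff' 1]
  convert! hs.mul_left s using 1
  · ext n
    have hcoeff : (FormalMultilinearSeries.ofScalars ℝ a).derivSeries.coeff n 1 =
        (n + 1) • a (n + 1) := by
      rw [FormalMultilinearSeries.derivSeries_coeff_one, FormalMultilinearSeries.coeff_ofScalars]
    change _ = s * (s ^ n • (FormalMultilinearSeries.ofScalars ℝ a).derivSeries.coeff n 1)
    rw [hcoeff]
    simp only [smul_eq_mul, nsmul_eq_mul]
    push_cast
    ring
  · simp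

theorem eq_add_of_hasSum_of_recurrence {b c : ℕ → ℝ} {s A B C : ℝ} (h₀ : a 0 = 0) (h₁ : a 1 = b 0)
    (h₂ : ∀ n, a (n + 2) = b (n + 1) + c n) (hA : HasSum (fun n => a n * s ^ n) A)
    (hB : HasSum (fun n => b n * s ^ n) B) (hC : HasSum (fun n => c n * s ^ n) C) :
    A = s * B + s ^ 2 * C := by
  have hA' : HasSum (fun n => a (n + 2) * s ^ (n + 2)) (A - b 0 * s) := by
    simpa [Finset.sum_range_succ, h₀, h₁] using (hasSum_nat_add_iff' 2).2 hA
  have hB' : HasSum (fun n => b (n + 1) * s ^ (n + 1)) (B - b 0) := by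
    simpa using (hasSum_nat_add_iff' 1).2 hB
  have hA'' : HasSum (fun n => a (n + 2) * s ^ (n + 2)) (s * (B - b 0) + s ^ 2 * C) := by
    refine ((hB'.mul_left s).add (hC.mul_left (s ^ 2))).congr_fun fun n => ?_
    rw [h₂]
    ring
  linear_combination hA'.unique hA''

end PowerSeries

/-- The eigenvalue of `s² d²/ds²` on `s ^ (n + k)`. -/
def eulerSymbol (k : ℝ) (n : ℕ) : ℝ := (n + k) * (n + k - 1)

/-- Taylor coefficients of the function `χ` for which `s ^ k * χ s` solves
`2 (2 - s)² s² y'' = (8 k (k - 1) + c₁ s + c₂ s²) y`, normalised by `χ 0 = 1`. -/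
def frobeniusCoeff (k c₁ c₂ : ℝ) : ℕ → ℝ
  | 0 => 1
  | 1 => (8 * eulerSymbol k 0 + c₁) / (8 * (eulerSymbol k 1 - eulerSymbol k 0))
  | n + 2 => ((8 * eulerSymbol k (n + 1) + c₁) * frobeniusCoeff k c₁ c₂ (n + 1) +
      (c₂ - 2 * eulerSymbol k n) * frobeniusCoeff k c₁ c₂ n) /
        (8 * (eulerSymbol k (n + 2) - eulerSymbol k 0))

section Frobenius

variable {k : ℝ} (c₁ c₂ : ℝ)

theorem eulerSymbol_sub_zero_pos (hk : 0 < k) (n : ℕ) :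
    0 < eulerSymbol k (n + 1) - eulerSymbol k 0 := by
  have : eulerSymbol k (n + 1) - eulerSymbol k 0 = (n + 1) * (n + 2 * k) := by
    simp only [eulerSymbol]
    push_cast
    ring
  rw [this]
  positivity

theorem abs_frobeniusCoeff_add_two_le (hk : 0 < k) (n : ℕ) :
    |frobeniusCoeff k c₁ c₂ (n + 2)| ≤ (1 + k + |c₁|) * |frobeniusCoeff k c₁ c₂ (n + 1)| +
      (1 + k + |c₂|) * |frobeniusCoeff k c₁ c₂ n| := by
  have hD : 0 < 8 * (eulerSymbol k (n + 2) - eulerSymbol k 0) :=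
    mul_pos (by norm_num) (eulerSymbol_sub_zero_pos hk (n + 1))
  have hn : (0 : ℝ) ≤ n := n.cast_nonneg
  set d : ℝ := (n + 2) * (n + 1 + 2 * k) with hd
  have hDd : 8 * (eulerSymbol k (n + 2) - eulerSymbol k 0) = 8 * d := by
    simp only [eulerSymbol, hd]
    push_cast
    ring
  have hd₁ : 1 ≤ d := by nlinarith
  have hm : (n + 1 + k) * (n + k) ≤ (1 + k) * d := by nlinarith [mul_nonneg hn hk.le]
  have h₁ : |8 * eulerSymbol k (n + 1) + c₁| ≤ (1 + k + |c₁|) * (8 * d) := by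
    have : eulerSymbol k (n + 1) = (n + 1 + k) * (n + k) := by
      simp only [eulerSymbol]
      push_cast
      ring
    rw [this]
    refine (abs_add_le _ _).trans ?_
    rw [abs_of_nonneg (by positivity)]
    nlinarith [abs_nonneg c₁]
  have h₂ : |c₂ - 2 * eulerSymbol k n| ≤ (1 + k + |c₂|) * (8 * d) := by
    have : |eulerSymbol k n| ≤ (n + 1 + k) * (n + k) := by
      rw [eulerSymbol, abs_le]
      constructor <;> nlinarith
    refine (abs_sub _ _).trans ?_
    rw [abs_mul, abs_two]
    nlinarith [abs_nonneg c₂]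
  rw [← hDd] at h₁ h₂
  rw [frobeniusCoeff, abs_div, abs_of_pos hD, div_le_iff₀ hD]
  refine (abs_add_le _ _).trans ?_
  rw [abs_mul, abs_mul]
  calc _ ≤ _ := add_le_add (mul_le_mul_of_nonneg_right h₁ (abs_nonneg _))
        (mul_le_mul_of_nonneg_right h₂ (abs_nonneg _))
    _ = _ := by ring

theorem exists_analyticAt_frobenius_solution (hk : 0 < k) :
    ∃ χ : ℝ → ℝ, AnalyticAt ℝ χ 0 ∧ χ 0 = 1 ∧ ∀ᶠ s in 𝓝 0,
      2 * (2 - s) ^ 2 * (s ^ 2 * deriv (deriv χ) s + 2 * k * (s * deriv χ s) + k * (k - 1) * χ s) =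
        (8 * k * (k - 1) + c₁ * s + c₂ * s ^ 2) * χ s := by
  obtain ⟨C, R, hR, hCR⟩ :=
    exists_geometric_bound_of_recurrence (abs_frobeniusCoeff_add_two_le c₁ c₂ hk)
  obtain ⟨χ, hχ, hsum₀⟩ := exists_analyticAt_hasSum_of_geometric_bound hR hCR
  have hsum₁ := eventually_hasSum_mul_deriv hsum₀
  have hsum₂ := eventually_hasSum_mul_deriv hsum₁
  refine ⟨χ, hχ, ?_, ?_⟩
  · simpa [frobeniusCoeff] using
      hsum₀.self_of_nhds.unique (hasSum_single 0 fun n hn => by simp [hn])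
  filter_upwards [hsum₀, hsum₁, hsum₂, hχ.deriv.eventually_analyticAt] with s h₀ h₁ h₂ hs
  have hEuler : deriv (fun s => s * deriv χ s) s = deriv χ s + s * deriv (deriv χ) s := by
    simpa using ((hasDerivAt_id' s).fun_mul hs.differentiableAt.hasDerivAt).deriv
  rw [hEuler] at h₂
  have hT : HasSum (fun n => eulerSymbol k n * frobeniusCoeff k c₁ c₂ n * s ^ n)
      (s ^ 2 * deriv (deriv χ) s + 2 * k * (s * deriv χ s) + k * (k - 1) * χ s) := by
    convert! (h₂.add (h₁.mul_left (2 * k - 1))).add (h₀.mul_left (k * (k - 1))) using 1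
    · ext n
      simp only [eulerSymbol]
      ring
    · ring
  set T := s ^ 2 * deriv (deriv χ) s + 2 * k * (s * deriv χ s) + k * (k - 1) * χ s
  have key : 8 * (T - eulerSymbol k 0 * χ s) =
      s * (8 * T + c₁ * χ s) + s ^ 2 * (c₂ * χ s - 2 * T) := by
    refine eq_add_of_hasSum_of_recurrence
      (a := fun n => 8 * (eulerSymbol k n - eulerSymbol k 0) * frobeniusCoeff k c₁ c₂ n)
      (b := fun n => (8 * eulerSymbol k n + c₁) * frobeniusCoeff k c₁ c₂ n)
      (c := fun n => (c₂ - 2 * eulerSymbol k n) * frobeniusCoeff k c₁ c₂ n) (by simp) ?_ ?_ ?_ ?_ ?_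
    · have := (eulerSymbol_sub_zero_pos hk 0).ne'
      simp only [frobeniusCoeff]
      field_simp
    · intro n
      have := (eulerSymbol_sub_zero_pos hk (n + 1)).ne'
      simp only [frobeniusCoeff]
      field_simp
    · exact ((hT.sub (h₀.mul_left (eulerSymbol k 0))).mul_left 8).congr_fun fun n => by ring
    · exact ((hT.mul_left 8).add (h₀.mul_left c₁)).congr_fun fun n => by ring
    · exact ((h₀.mul_left c₂).sub (hT.mul_left 2)).congr_fun fun n => by ring
  simp only [eulerSymbol, Nat.cast_zero, zero_add] at key
  linear_combination key

end Frobenius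

/-! ### The Riccati operator -/

/-- The first-order nonlinear operator that controls `U(1 + cos θ) = |x'| u_θ`: the Navier–Stokes
equations determine the third derivative of `riccati U`. -/
def riccati (U : ℝ → ℝ) (s : ℝ) : ℝ := s * (2 - s) * deriv U s + 2 * (s - 1) * U s + U s ^ 2 / 2

section Riccati

variable {U : ℝ → ℝ} {τ : ℝ}

theorem contDiffAt_deriv_of_succ {f : ℝ → ℝ} {n : WithTop ℕ∞} {s : ℝ}
    (hf : ContDiffAt ℝ (n + 1) f s) : ContDiffAt ℝ n (deriv f) s :=
  hf.fderiv_right_succ.clm_apply contDiffAt_const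

theorem contDiffAt_riccati {n : WithTop ℕ∞} {s : ℝ} (hU : ContDiffAt ℝ (n + 1) U s) :
    ContDiffAt ℝ n (riccati U) s := by
  have hU' := contDiffAt_deriv_of_succ hU
  have hU₀ : ContDiffAt ℝ n U s := hU.of_le le_self_add
  unfold riccati
  fun_prop

-- The substitution `U = 2 (2 - s) s y' / y` with `y = s ^ k * χ` linearises the Riccati equation.
theorem exists_analyticAt_riccati_eq {k : ℝ} (hk : 0 < k) (c₁ c₂ : ℝ) :
    ∃ g : ℝ → ℝ, AnalyticAt ℝ g 0 ∧ g 0 = 4 * k ∧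
      ∀ᶠ s in 𝓝 0, riccati g s = 8 * k * (k - 1) + c₁ * s + c₂ * s ^ 2 := by
  obtain ⟨χ, hχ, hχ₀, hode⟩ := exists_analyticAt_frobenius_solution c₁ c₂ hk
  have hχne : χ 0 ≠ 0 := by simp [hχ₀]
  refine ⟨fun s => 2 * (2 - s) * (k + s * deriv χ s / χ s), ?_, ?_, ?_⟩
  · have := hχ.deriv
    fun_prop (disch := assumption)
  · norm_num [hχ₀]
  filter_upwards [hode, hχ.eventually_analyticAt, hχ.deriv.eventually_analyticAt,
    hχ.continuousAt.eventually_ne hχne] with s hs hs₀ hs₁ hne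
  have hderiv := (((hasDerivAt_id' s).const_sub 2).const_mul 2).fun_mul
    ((((hasDerivAt_id' s).fun_mul hs₁.differentiableAt.hasDerivAt).fun_div
      hs₀.differentiableAt.hasDerivAt hne).const_add k)
  rw [riccati, hderiv.deriv]
  field_simp
  linear_combination χ s * hs

theorem tendsto_riccati_sub_deriv (hlim : Tendsto U (𝓝[>] 0) (𝓝 τ)) :
    Tendsto (fun s => 2 * (s - 1) * U s + U s ^ 2 / 2) (𝓝[>] 0) (𝓝 (τ ^ 2 / 2 - 2 * τ)) := by
  have hid : Tendsto (fun s : ℝ => s) (𝓝[>] 0) (𝓝 0) :=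
    tendsto_nhdsWithin_of_tendsto_nhds tendsto_id
  convert! (((hid.sub_const 1).const_mul 2).mul hlim).add ((hlim.pow 2).div_const 2) using 2
  ring

theorem frequently_lt_riccati (hU : ∀ᶠ s in 𝓝[>] 0, DifferentiableAt ℝ U s)
    (hlim : Tendsto U (𝓝[>] 0) (𝓝 τ)) {y : ℝ} (hy : y < τ ^ 2 / 2 - 2 * τ) :
    ∃ᶠ s in 𝓝[>] 0, y < riccati U s := by
  set η := τ ^ 2 / 2 - 2 * τ - y with hη
  have hη₀ : 0 < η := sub_pos.2 hy
  have hfreq : ∃ᶠ s in 𝓝[>] 0, -(η / 4) < s * deriv U s :=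
    frequently_neg_lt_mul_deriv (hU.mono fun s hs => hs.hasDerivAt) hlim (by positivity)
  have hrest := (tendsto_riccati_sub_deriv hlim).eventually
    (lt_mem_nhds (show y + η / 2 < τ ^ 2 / 2 - 2 * τ by linarith))
  refine (hfreq.and_eventually (hrest.and (Ioo_mem_nhdsGT two_pos))).mono ?_
  rintro s ⟨hs, hs', hs₀, hs₂⟩
  have : -(η / 2) < (2 - s) * (s * deriv U s) := by nlinarith
  unfold riccati
  linarith

theorem eq_of_tendsto_riccati (hU : ∀ᶠ s in 𝓝[>] 0, DifferentiableAt ℝ U s)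
    (hlim : Tendsto U (𝓝[>] 0) (𝓝 τ)) {L : ℝ} (hL : Tendsto (riccati U) (𝓝[>] 0) (𝓝 L)) :
    L = τ ^ 2 / 2 - 2 * τ := by
  have hid : Tendsto (fun s : ℝ => 2 - s) (𝓝[>] 0) (𝓝 2) :=
    tendsto_nhdsWithin_of_tendsto_nhds ((continuous_sub_left 2).tendsto' 0 2 (sub_zero 2))
  have hlimit := (hL.sub (tendsto_riccati_sub_deriv hlim)).div hid two_ne_zero
  have := eq_zero_of_tendsto_mul_deriv (hU.mono fun s hs => hs.hasDerivAt) hlim <|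
    hlimit.congr' <| by
      filter_upwards [Ioo_mem_nhdsGT (two_pos (α := ℝ))] with s hs
      have : 2 - s ≠ 0 := (sub_pos.2 hs.2).ne'
      simp only [Pi.div_apply, riccati]
      field_simp
      ring
  linarith

theorem exists_eventually_sub_linear_le_of_le_riccati
    (hU : ∀ᶠ s in 𝓝[>] 0, DifferentiableAt ℝ U s) (hlim : Tendsto U (𝓝[>] 0) (𝓝 τ)) (hτ : 2 < τ)
    {K : ℝ} (hK : 0 ≤ K) (hR : ∀ᶠ s in 𝓝[>] 0, τ ^ 2 / 2 - 2 * τ - K * s ≤ riccati U s) :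
    ∃ M, 0 ≤ M ∧ ∀ᶠ s in 𝓝[>] 0, τ - M * s ≤ U s := by
  set M := 2 * (K + 2 * τ) / (τ - 2)
  have hτ₂ : 0 < τ - 2 := sub_pos.2 hτ
  have hM₀ : 0 ≤ M := by positivity
  have hMτ : M * (τ - 2) = 2 * (K + 2 * τ) := div_mul_cancel₀ _ hτ₂.ne'
  have hlim' : Tendsto (fun s => U s - τ + M * s) (𝓝[>] 0) (𝓝 0) := by
    have hid : Tendsto (fun s : ℝ => s) (𝓝[>] 0) (𝓝 0) :=
      tendsto_nhdsWithin_of_tendsto_nhds tendsto_id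
    simpa using (hlim.sub_const τ).add (hid.const_mul M)
  refine ⟨M, hM₀, (eventually_nonneg_of_deriv_nonneg_of_neg
    (hU.mono fun s hs => (hs.hasDerivAt.sub_const τ).fun_add ((hasDerivAt_id' s).const_mul M)) ?_
    hlim').mono fun s hs => by linarith⟩
  filter_upwards [hR, hlim.eventually (lt_mem_nhds hτ), Ioo_mem_nhdsGT (two_pos (α := ℝ))]
    with s hs hU₂ ⟨hs₀, hs₂⟩ hneg
  have hgap : M * s < τ - U s := by linarith
  have hgap₀ : 0 < τ - U s := (mul_nonneg hM₀ hs₀.le).trans_lt hgap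
  have hkey : 0 ≤ s * (2 - s) * deriv U s := by
    have h₁ : M * s * (τ - 2) ≤ (τ - U s) * (τ - 2) := by gcongr
    have h₂ : (τ - U s) * (τ - 2) ≤ (τ - U s) * (τ + U s - 4) :=
      mul_le_mul_of_nonneg_left (by linarith) hgap₀.le
    have h₃ : s * U s ≤ s * τ := by gcongr; linarith
    have h₄ : M * s * (τ - 2) = 2 * (K + 2 * τ) * s := by rw [← hMτ]; ring
    unfold riccati at hs
    linarith
  have := nonneg_of_mul_nonneg_right hkey (mul_pos hs₀ (sub_pos.2 hs₂))
  linarith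

-- For `τ > 2` the difference `D` of two solutions satisfies `s (2 - s) D' = (2 - τ + o(1)) D`,
-- so that `D²` decreases.
theorem eventuallyEq_of_riccati_eventuallyEq {V : ℝ → ℝ}
    (hU : ∀ᶠ s in 𝓝[>] 0, DifferentiableAt ℝ U s) (hV : ∀ᶠ s in 𝓝[>] 0, DifferentiableAt ℝ V s)
    (hUτ : Tendsto U (𝓝[>] 0) (𝓝 τ)) (hVτ : Tendsto V (𝓝[>] 0) (𝓝 τ)) (hτ : 2 < τ)
    (hR : riccati U =ᶠ[𝓝[>] 0] riccati V) : U =ᶠ[𝓝[>] 0] V := by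
  have hlim : Tendsto (fun s => -(U s - V s) ^ 2) (𝓝[>] 0) (𝓝 0) := by
    simpa using ((hUτ.sub hVτ).pow 2).neg
  have hnonneg := eventually_nonneg_of_deriv_nonneg_of_tendsto_zero
    (hU.and hV |>.mono fun s hs =>
      ((hs.1.hasDerivAt.fun_sub hs.2.hasDerivAt).fun_pow 2).fun_neg) ?_ hlim
  · filter_upwards [hnonneg] with s hs
    exact sub_eq_zero.1 (pow_eq_zero_iff two_ne_zero |>.1 (by nlinarith [sq_nonneg (U s - V s)]))
  filter_upwards [hR, hUτ.eventually (lt_mem_nhds hτ), hVτ.eventually (lt_mem_nhds hτ),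
    Ioo_mem_nhdsGT (two_pos (α := ℝ))] with s hs hU₂ hV₂ ⟨hs₀, hs₂⟩
  set D := U s - V s
  set D' := deriv U s - deriv V s
  have hD : s * (2 - s) * D' = (2 - 2 * s - (U s + V s) / 2) * D := by
    unfold riccati at hs
    simp only [D, D']
    linear_combination hs
  have hDD' : 0 ≤ s * (2 - s) * -(D * D') := by
    have : 0 ≤ (2 * s - 2 + (U s + V s) / 2) * D ^ 2 := by
      have : 0 ≤ 2 * s - 2 + (U s + V s) / 2 := by linarith
      positivity
    linear_combination this + D * hD
  have := nonneg_of_mul_nonneg_right hDD' (mul_pos hs₀ (sub_pos.2 hs₂))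
  simp only [Nat.cast_ofNat, pow_one, Nat.add_one_sub_one]
  linarith

end Riccati

/-! ### Rigidity of the swirl -/

/-- The germs at `0⁺` of the profiles `U (1 + cos θ) = |x'| u_θ` and `W (1 + cos θ) = |x'| u_φ` of a
`(-1)`-homogeneous axisymmetric Navier–Stokes solution, after elimination of pressure and `u_r`. -/
structure IsSwirlProfile (U W : ℝ → ℝ) : Prop where
  contDiffAt_polar : ∀ᶠ s in 𝓝[>] 0, ContDiffAt ℝ 3 U s
  contDiffAt_swirl : ∀ᶠ s in 𝓝[>] 0, ContDiffAt ℝ 2 W s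
  swirl_eq : ∀ᶠ s in 𝓝[>] 0, s * (2 - s) * deriv (deriv W) s + U s * deriv W s = 0
  hasDerivAt_riccati : ∀ᶠ s in 𝓝[>] 0,
    HasDerivAt (deriv (deriv (riccati U))) (-2 * W s * deriv W s / (s * (2 - s))) s

-- Abel's identity: `V` behaves like `exp (-∫ U / (s (2 - s)))`.
theorem exists_pos_le_sq_mul_pow {U V : ℝ → ℝ} {n : ℕ} {M : ℝ} (hM : 0 ≤ M)
    (hV : ∀ᶠ s in 𝓝[>] 0, HasDerivAt V (-(U s * V s) / (s * (2 - s))) s)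
    (hU₀ : ∀ᶠ s in 𝓝[>] 0, 0 ≤ U s) (hU : ∀ᶠ s in 𝓝[>] 0, n - M * s ≤ U s)
    (hne : ∃ᶠ s in 𝓝[>] 0, V s ≠ 0) :
    ∃ c > 0, ∀ᶠ s in 𝓝[>] 0, c ≤ V s ^ 2 * s ^ n := by
  set E : ℝ → ℝ := fun s => V s ^ 2 * s ^ n * exp (-(M * s)) with hE
  obtain ⟨b, hb, hmono⟩ := exists_monotoneOn_Ioc_of_deriv_nonneg (g := fun s => -E s)
    (hV.mono fun s hs => (((hs.fun_pow 2).fun_mul (hasDerivAt_pow n s)).fun_mul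
      (((hasDerivAt_id' s).const_mul M).fun_neg.exp)).fun_neg) <| by
    filter_upwards [hU₀, hU, Ioo_mem_nhdsGT (two_pos (α := ℝ))] with s hs₀ hs ⟨hpos, hlt⟩
    have h2s : 0 < 2 - s := sub_pos.2 hlt
    have hfactor : 0 ≤ (2 - s) * (U s - (n - M * s)) + s * U s :=
      add_nonneg (mul_nonneg h2s.le (sub_nonneg.2 hs)) (mul_nonneg hpos.le hs₀)
    have hpow : n * s ^ (n - 1) = n * s ^ n / s := by
      cases n <;> simp [pow_succ, hpos.ne', mul_div_assoc]
    calc 0 ≤ E s * ((2 - s) * (U s - (n - M * s)) + s * U s) / (s * (2 - s)) := by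
          have : 0 ≤ E s := by positivity
          positivity
      _ = _ := by
          rw [hpow, hE]
          field_simp
          ring
  obtain ⟨t, ht, htb⟩ := (hne.and_eventually (Ioc_mem_nhdsGT hb)).exists
  have ht₀ : 0 < t := htb.1
  refine ⟨E t, by positivity, ?_⟩
  filter_upwards [Ioc_mem_nhdsGT ht₀] with s hs
  calc E t ≤ E s := neg_le_neg_iff.1 (hmono ⟨hs.1, hs.2.trans htb.2⟩ htb hs.2)
    _ ≤ V s ^ 2 * s ^ n := mul_le_of_le_one_right
      (mul_nonneg (sq_nonneg _) (pow_nonneg hs.1.le n))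
      (exp_le_one_iff.2 (neg_nonpos.2 (mul_nonneg hM hs.1.le)))

theorem sqrt_div_le_of_le_sq_mul_cube {c s w : ℝ} (hs : 0 < s) (hw : 0 ≤ w)
    (h : c ≤ w ^ 2 * s ^ 3) : √c / (s * √s) ≤ w := by
  rw [div_le_iff₀ (by positivity), sqrt_le_left (by positivity)]
  calc c ≤ w ^ 2 * s ^ 3 := h
    _ = (w * (s * √s)) ^ 2 := by
      rw [mul_pow, mul_pow, sq_sqrt hs.le]
      ring

namespace IsSwirlProfile

variable {U W : ℝ → ℝ} {τ : ℝ}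

theorem eventually_differentiableAt (h : IsSwirlProfile U W) :
    ∀ᶠ s in 𝓝[>] 0, DifferentiableAt ℝ U s :=
  h.contDiffAt_polar.mono fun _ hs => hs.differentiableAt three_ne_zero

theorem eventually_hasDerivAt_swirl (h : IsSwirlProfile U W) :
    ∀ᶠ s in 𝓝[>] 0, HasDerivAt W (deriv W s) s :=
  h.contDiffAt_swirl.mono fun _ hs => (hs.differentiableAt two_ne_zero).hasDerivAt

theorem eventually_hasDerivAt_deriv_swirl (h : IsSwirlProfile U W) :
    ∀ᶠ s in 𝓝[>] 0, HasDerivAt (deriv W) (-(U s * deriv W s) / (s * (2 - s))) s := by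
  filter_upwards [h.contDiffAt_swirl, h.swirl_eq, Ioo_mem_nhdsGT (two_pos (α := ℝ))]
    with s hs hode ⟨hs₀, hs₂⟩
  have hdiff : DifferentiableAt ℝ (deriv W) s :=
    (contDiffAt_deriv_of_succ (n := 1) hs).differentiableAt one_ne_zero
  refine hdiff.hasDerivAt.congr_deriv ?_
  rw [eq_div_iff (mul_pos hs₀ (sub_pos.2 hs₂)).ne']
  linear_combination hode

theorem eventually_hasDerivAt_riccati (h : IsSwirlProfile U W) :
    (∀ᶠ s in 𝓝[>] 0, HasDerivAt (riccati U) (deriv (riccati U) s) s) ∧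
      ∀ᶠ s in 𝓝[>] 0, HasDerivAt (deriv (riccati U)) (deriv (deriv (riccati U)) s) s := by
  have hR : ∀ᶠ s in 𝓝[>] 0, ContDiffAt ℝ 2 (riccati U) s :=
    h.contDiffAt_polar.mono fun s hs => contDiffAt_riccati hs
  exact ⟨hR.mono fun s hs => (hs.differentiableAt two_ne_zero).hasDerivAt,
    hR.mono fun s hs =>
      ((contDiffAt_deriv_of_succ (n := 1) hs).differentiableAt one_ne_zero).hasDerivAt⟩

theorem neg_swirl (h : IsSwirlProfile U W) : IsSwirlProfile U fun s => -W s where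
  contDiffAt_polar := h.contDiffAt_polar
  contDiffAt_swirl := h.contDiffAt_swirl.mono fun _ hs => hs.neg
  swirl_eq := h.swirl_eq.mono fun s hs => by
    simp only [deriv.fun_neg', deriv.fun_neg]
    linear_combination -hs
  hasDerivAt_riccati := h.hasDerivAt_riccati.mono fun s hs => by
    simpa only [deriv.fun_neg, mul_neg, neg_mul, neg_neg] using hs

theorem tendsto_atBot_of_sq_mul_sq_ge (h : IsSwirlProfile U W) {c : ℝ} (hc : 0 < c)
    (hpos : ∀ᶠ s in 𝓝[>] 0, 0 < deriv W s) (hW : ∀ᶠ s in 𝓝[>] 0, c ≤ deriv W s ^ 2 * s ^ 2) :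
    Tendsto W (𝓝[>] 0) atBot := by
  refine tendsto_atBot_of_deriv_le (h := fun s => √c * log s) h.eventually_hasDerivAt_swirl
    (eventually_mem_nhdsWithin.mono fun s hs => (hasDerivAt_log hs.ne').const_mul _) ?_
    (tendsto_log_nhdsGT_zero.const_mul_atBot (sqrt_pos.2 hc))
  filter_upwards [hpos, hW, eventually_mem_nhdsWithin] with s hs hcs hs₀
  have hs₀' : 0 < s := hs₀
  rw [← div_eq_mul_inv, div_le_iff₀ hs₀']
  exact (sqrt_le_left (by positivity)).2 (hcs.trans_eq (by ring))

theorem eventually_swirl_le_neg_div_sqrt (h : IsSwirlProfile U W) {c : ℝ} (hc : 0 < c)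
    (hpos : ∀ᶠ s in 𝓝[>] 0, 0 < deriv W s) (hW : ∀ᶠ s in 𝓝[>] 0, c ≤ deriv W s ^ 2 * s ^ 3) :
    ∀ᶠ s in 𝓝[>] 0, W s ≤ -√c / √s := by
  obtain ⟨C, hC⟩ := exists_eventually_le_of_deriv_nonneg (g := fun s => W s + 2 * √c * (√s)⁻¹)
    (h.eventually_hasDerivAt_swirl.and eventually_mem_nhdsWithin |>.mono fun s hs =>
      hs.1.fun_add (((hasDerivAt_sqrt hs.2.ne').fun_inv (sqrt_pos.2 hs.2).ne').const_mul _)) <| by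
    filter_upwards [hpos, hW, eventually_mem_nhdsWithin] with s hs hcs (hs₀ : 0 < s)
    have hle := sqrt_div_le_of_le_sq_mul_cube hs₀ hs.le hcs
    have : 2 * √c * (-(1 / (2 * √s)) / √s ^ 2) = -(√c / (s * √s)) := by
      rw [sq_sqrt hs₀.le]
      field_simp
    linarith
  have hinv : Tendsto (fun s => √c * (√s)⁻¹) (𝓝[>] 0) atTop := by
    refine (tendsto_inv_nhdsGT_zero.comp ?_).const_mul_atTop (sqrt_pos.2 hc)
    refine tendsto_nhdsWithin_iff.2 ⟨?_, eventually_mem_nhdsWithin.mono fun s hs => sqrt_pos.2 hs⟩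
    exact tendsto_nhdsWithin_of_tendsto_nhds (continuous_sqrt.tendsto' 0 0 sqrt_zero)
  filter_upwards [hC, hinv.eventually_ge_atTop C] with s hs hsC
  rw [neg_div, div_eq_mul_inv]
  linarith

theorem tendsto_riccati_atBot (h : IsSwirlProfile U W) {c : ℝ} (hc : 0 < c)
    (hpos : ∀ᶠ s in 𝓝[>] 0, 0 < deriv W s) (hW : ∀ᶠ s in 𝓝[>] 0, c ≤ deriv W s ^ 2 * s ^ 3) :
    Tendsto (riccati U) (𝓝[>] 0) atBot := by
  obtain ⟨hR₁, hR₂⟩ := h.eventually_hasDerivAt_riccati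
  refine tendsto_atBot_of_le_third_deriv hR₁ hR₂ h.hasDerivAt_riccati hc ?_
  filter_upwards [hpos, hW, h.eventually_swirl_le_neg_div_sqrt hc hpos hW,
    Ioo_mem_nhdsGT (two_pos (α := ℝ))] with s hs hsc hsW ⟨hs₀, hs₂⟩
  have hs2 : 0 < 2 - s := sub_pos.2 hs₂
  have hprod : c / s ^ 2 ≤ -W s * deriv W s :=
    calc c / s ^ 2 = √c / √s * (√c / (s * √s)) := by
          rw [div_mul_div_comm, mul_self_sqrt hc.le, mul_left_comm, mul_self_sqrt hs₀.le, sq]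
      _ ≤ -W s * deriv W s := by
          rw [neg_div] at hsW
          exact mul_le_mul (by linarith) (sqrt_div_le_of_le_sq_mul_cube hs₀ hs.le hsc)
            (by positivity) ((by positivity : 0 ≤ √c / √s).trans (by linarith))
  calc c / s ^ 3 = c / s ^ 2 * (2 - s) / (s * (2 - s)) := by field_simp
    _ ≤ c / s ^ 2 * 2 / (s * (2 - s)) := by gcongr; linarith
    _ ≤ -2 * W s * deriv W s / (s * (2 - s)) := by
        refine div_le_div_of_nonneg_right ?_ (by positivity)
        linarith

-- If `W' > 0` then `W` tends to `-∞`, so that `F = riccati U` satisfies `F''' ≥ 0`; this forces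
-- `U ≥ τ - O(s)`, hence `W' ≳ s ^ (-3/2)`, `F''' ≳ s⁻³` and `F → -∞`.
theorem not_eventually_deriv_pos (h : IsSwirlProfile U W) (hlim : Tendsto U (𝓝[>] 0) (𝓝 τ))
    (hτ : 3 ≤ τ) : ¬ ∀ᶠ s in 𝓝[>] 0, 0 < deriv W s := by
  intro hpos
  obtain ⟨hR₁, hR₂⟩ := h.eventually_hasDerivAt_riccati
  have hU₂ : ∀ᶠ s in 𝓝[>] 0, 2 < U s := hlim.eventually (lt_mem_nhds (by linarith))
  have hU₀ : ∀ᶠ s in 𝓝[>] 0, 0 ≤ U s := hU₂.mono fun s hs => by linarith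
  have hne : ∃ᶠ s in 𝓝[>] 0, deriv W s ≠ 0 := (hpos.mono fun s hs => hs.ne').frequently
  obtain ⟨c, hc, hWc⟩ := exists_pos_le_sq_mul_pow (n := 2) le_rfl
    h.eventually_hasDerivAt_deriv_swirl hU₀ (hU₂.mono fun s hs => by push_cast; linarith) hne
  have hWneg : ∀ᶠ s in 𝓝[>] 0, W s ≤ 0 :=
    (h.tendsto_atBot_of_sq_mul_sq_ge hc hpos hWc).eventually_le_atBot 0
  obtain ⟨K, hK, b, hb, hmono⟩ := exists_monotoneOn_add_linear hR₁ hR₂ h.hasDerivAt_riccati <| by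
    filter_upwards [hpos, hWneg, Ioo_mem_nhdsGT (two_pos (α := ℝ))] with s hs hsW ⟨hs₀, hs₂⟩
    have := mul_nonneg (neg_nonneg.2 hsW) hs.le
    exact div_nonneg (by linarith) (mul_pos hs₀ (sub_pos.2 hs₂)).le
  have hfreq : ∀ y < τ ^ 2 / 2 - 2 * τ, ∃ᶠ s in 𝓝[>] 0, y < riccati U s :=
    fun y hy => frequently_lt_riccati h.eventually_differentiableAt hlim hy
  obtain ⟨M, hM, hUM⟩ := exists_eventually_sub_linear_le_of_le_riccati
    h.eventually_differentiableAt hlim (by linarith) hK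
    (eventually_le_of_monotoneOn_add_linear hK hb hmono hfreq)
  obtain ⟨c', hc', hWc'⟩ := exists_pos_le_sq_mul_pow (n := 3) hM
    h.eventually_hasDerivAt_deriv_swirl hU₀ (hUM.mono fun s hs => by push_cast; linarith) hne
  obtain ⟨s, hs, hs'⟩ := ((hfreq _ (sub_one_lt _)).and_eventually
    ((h.tendsto_riccati_atBot hc' hpos hWc').eventually_le_atBot _)).exists
  exact hs.not_ge hs'

theorem eventually_deriv_eq_zero (h : IsSwirlProfile U W) (hlim : Tendsto U (𝓝[>] 0) (𝓝 τ))
    (hτ : 3 ≤ τ) : ∀ᶠ s in 𝓝[>] 0, deriv W s = 0 := by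
  by_contra hne
  have hU₂ : ∀ᶠ s in 𝓝[>] 0, 2 < U s := hlim.eventually (lt_mem_nhds (by linarith))
  obtain ⟨c, hc, hWc⟩ := exists_pos_le_sq_mul_pow (n := 2) le_rfl
    h.eventually_hasDerivAt_deriv_swirl (hU₂.mono fun s hs => by linarith)
    (hU₂.mono fun s hs => by push_cast; linarith) (not_eventually.1 hne)
  obtain ⟨b, hb, hWb⟩ :=
    mem_nhdsGT_iff_exists_Ioc_subset.1 (hWc.and h.eventually_hasDerivAt_swirl)
  have hne₀ : ∀ s ∈ Set.Ioc 0 b, deriv W s ≠ 0 := fun s hs hzero => by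
    have := (hWb hs).1
    rw [hzero] at this
    linarith
  rcases hasDerivWithinAt_forall_lt_or_forall_gt_of_forall_ne (convex_Ioc 0 b)
    (fun s hs => (hWb hs).2.hasDerivWithinAt) hne₀ with hneg | hpos
  · refine h.neg_swirl.not_eventually_deriv_pos hlim hτ ?_
    filter_upwards [Ioc_mem_nhdsGT hb] with s hs
    simpa only [deriv.fun_neg, neg_pos] using hneg s hs
  · exact h.not_eventually_deriv_pos hlim hτ
      (eventually_of_mem (Ioc_mem_nhdsGT hb) hpos)

theorem exists_analyticAt_eventuallyEq (h : IsSwirlProfile U W)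
    (hlim : Tendsto U (𝓝[>] 0) (𝓝 τ)) (hτ : 2 < τ) (hW : ∀ᶠ s in 𝓝[>] 0, deriv W s = 0) :
    ∃ g : ℝ → ℝ, AnalyticAt ℝ g 0 ∧ U =ᶠ[𝓝[>] 0] g := by
  obtain ⟨hR₁, hR₂⟩ := h.eventually_hasDerivAt_riccati
  obtain ⟨c₀, c₁, c₂, hquad⟩ := exists_eventually_eq_quadratic hR₁ hR₂ <|
    h.hasDerivAt_riccati.and hW |>.mono fun s hs => by simpa [hs.2] using hs.1
  have hquad_lim : Tendsto (fun s : ℝ => c₀ + c₁ * s + c₂ * s ^ 2) (𝓝[>] 0) (𝓝 c₀) :=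
    tendsto_nhdsWithin_of_tendsto_nhds <|
      (by fun_prop : Continuous fun s : ℝ => c₀ + c₁ * s + c₂ * s ^ 2).tendsto' _ _ (by simp)
  have hc₀ : c₀ = τ ^ 2 / 2 - 2 * τ :=
    eq_of_tendsto_riccati h.eventually_differentiableAt hlim
      (hquad_lim.congr' (EventuallyEq.symm hquad))
  obtain ⟨g, hg, hg₀, hRg⟩ := exists_analyticAt_riccati_eq (k := τ / 4) (by linarith) c₁ c₂
  refine ⟨g, hg, eventuallyEq_of_riccati_eventuallyEq h.eventually_differentiableAt
    (hg.eventually_analyticAt.filter_mono nhdsWithin_le_nhds |>.mono fun s hs =>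
      hs.differentiableAt) hlim ?_ hτ ?_⟩
  · convert! hg.continuousAt.tendsto.mono_left nhdsWithin_le_nhds using 2
    rw [hg₀]
    ring
  · filter_upwards [hquad, hRg.filter_mono nhdsWithin_le_nhds] with s hs hs'
    rw [hs, hs', hc₀]
    ring

theorem exists_eq_const_and_analyticAt (h : IsSwirlProfile U W)
    (hlim : Tendsto U (𝓝[>] 0) (𝓝 τ)) (hτ : 3 ≤ τ) :
    ∃ (c : ℝ) (g : ℝ → ℝ), AnalyticAt ℝ g 0 ∧
      ∀ᶠ s in 𝓝[>] 0, W s = c ∧ U s = g s ∧ deriv U s = deriv g s := by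
  have hW' := h.eventually_deriv_eq_zero hlim hτ
  obtain ⟨c, hc⟩ := exists_eventually_eq_const_of_deriv_eq_zero
    (h.eventually_hasDerivAt_swirl.and hW' |>.mono fun s hs => hs.2 ▸ hs.1)
  obtain ⟨g, hg, hUg⟩ := h.exists_analyticAt_eventuallyEq hlim (by linarith) hW'
  have hUg' : deriv U =ᶠ[𝓝[>] 0] deriv g :=
    (eventually_nhdsGT_eventually_nhds hUg).mono fun _ hs => EventuallyEq.deriv_eq hs
  exact ⟨c, g, hg, hc.and (hUg.and hUg')⟩

end IsSwirlProfile

/-! ### Partial derivatives and the Laplacian -/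

section PartialDerivatives

variable {f g : V3 → ℝ} {x : V3}

theorem pd_congr (j : Fin 3) (h : f =ᶠ[𝓝 x] g) : pd j f x = pd j g x := by
  rw [pd, pd, h.fderiv_eq]

theorem pd_add (j : Fin 3) (hf : DifferentiableAt ℝ f x) (hg : DifferentiableAt ℝ g x) :
    pd j (fun y => f y + g y) x = pd j f x + pd j g x := by
  simp [pd, fderiv_fun_add hf hg]

theorem pd_sub (j : Fin 3) (hf : DifferentiableAt ℝ f x) (hg : DifferentiableAt ℝ g x) :
    pd j (fun y => f y - g y) x = pd j f x - pd j g x := by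
  simp [pd, fderiv_fun_sub hf hg]

theorem pd_sum {ι : Type*} {s : Finset ι} {F : ι → V3 → ℝ} (j : Fin 3)
    (hF : ∀ i ∈ s, DifferentiableAt ℝ (F i) x) :
    pd j (fun y => ∑ i ∈ s, F i y) x = ∑ i ∈ s, pd j (F i) x := by
  simp [pd, fderiv_fun_sum hF]

theorem pd_mul (j : Fin 3) (hf : DifferentiableAt ℝ f x) (hg : DifferentiableAt ℝ g x) :
    pd j (fun y => f y * g y) x = pd j f x * g x + f x * pd j g x := by
  simp [pd, fderiv_fun_mul hf hg, add_comm, mul_comm]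

theorem pd_comp {φ : ℝ → ℝ} (j : Fin 3) (hφ : DifferentiableAt ℝ φ (f x))
    (hf : DifferentiableAt ℝ f x) :
    pd j (fun y => φ (f y)) x = deriv φ (f x) * pd j f x := by
  have h := hφ.hasDerivAt.comp_hasFDerivAt x hf.hasFDerivAt
  simp [pd, show fderiv ℝ (fun y => φ (f y)) x = _ from h.fderiv]

theorem pd_coord (i j : Fin 3) (x : V3) : pd j (fun y => y i) x = if i = j then 1 else 0 := by
  have h : HasFDerivAt (fun y : V3 => y i) (EuclideanSpace.proj i : V3 →L[ℝ] ℝ) x :=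
    (EuclideanSpace.proj i : V3 →L[ℝ] ℝ).hasFDerivAt
  simp [pd, h.fderiv, e3]

theorem contDiff_coord {n : WithTop ℕ∞} (i : Fin 3) : ContDiff ℝ n (fun y : V3 => y i) :=
  (EuclideanSpace.proj i : V3 →L[ℝ] ℝ).contDiff

theorem differentiable_coord (i : Fin 3) : Differentiable ℝ (fun y : V3 => y i) :=
  (contDiff_coord i).differentiable one_ne_zero

theorem sum_mul_pd_eq_fderiv (f : V3 → ℝ) (x v : V3) :
    ∑ j, v j * pd j f x = fderiv ℝ f x v := by
  have hv : v = ∑ j, v j • e3 j := by ext i; fin_cases i <;> simp [e3, Fin.sum_univ_three]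
  conv_rhs => rw [hv]
  simp [pd]

theorem differentiableAt_pd (j : Fin 3) (hf : ContDiffAt ℝ 2 f x) :
    DifferentiableAt ℝ (pd j f) x :=
  ((hf.fderiv_right (m := 1) (by norm_num)).differentiableAt one_ne_zero).clm_apply
    (differentiableAt_const _)

theorem eventually_differentiableAt_of_contDiffAt_two (hf : ContDiffAt ℝ 2 f x) :
    ∀ᶠ y in 𝓝 x, DifferentiableAt ℝ f y :=
  (hf.eventually (by norm_num)).mono fun _ hy => hy.differentiableAt two_ne_zero

theorem lap3_congr (h : f =ᶠ[𝓝 x] g) : lap3 f x = lap3 g x :=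
  Finset.sum_congr rfl fun j _ =>
    pd_congr j (h.eventuallyEq_nhds.mono fun _ hy => pd_congr j hy)

theorem lap3_const_add (c : ℝ) (f : V3 → ℝ) (x : V3) :
    lap3 (fun y => c + f y) x = lap3 f x := by
  simp [lap3, pd]

theorem lap3_coord (i : Fin 3) (x : V3) : lap3 (fun y => y i) x = 0 := by
  simp only [lap3, pd_coord]
  simp [pd]

theorem lap3_sub (hf : ContDiffAt ℝ 2 f x) (hg : ContDiffAt ℝ 2 g x) :
    lap3 (fun y => f y - g y) x = lap3 f x - lap3 g x := by
  rw [lap3, lap3, lap3, ← Finset.sum_sub_distrib]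
  refine Finset.sum_congr rfl fun j _ => ?_
  rw [← pd_sub j (differentiableAt_pd j hf) (differentiableAt_pd j hg)]
  refine pd_congr j ?_
  filter_upwards [eventually_differentiableAt_of_contDiffAt_two hf,
    eventually_differentiableAt_of_contDiffAt_two hg] with y hfy hgy using pd_sub j hfy hgy

theorem lap3_sum {ι : Type*} {s : Finset ι} {F : ι → V3 → ℝ}
    (hF : ∀ i ∈ s, ContDiffAt ℝ 2 (F i) x) :
    lap3 (fun y => ∑ i ∈ s, F i y) x = ∑ i ∈ s, lap3 (F i) x := by
  simp only [lap3]
  rw [Finset.sum_comm]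
  refine Finset.sum_congr rfl fun j _ => ?_
  rw [← pd_sum j fun i hi => differentiableAt_pd j (hF i hi)]
  refine pd_congr j ?_
  filter_upwards [(Filter.eventually_all_finset s).2 fun i hi =>
    eventually_differentiableAt_of_contDiffAt_two (hF i hi)] with y hy using pd_sum j hy

theorem lap3_mul (hf : ContDiffAt ℝ 2 f x) (hg : ContDiffAt ℝ 2 g x) :
    lap3 (fun y => f y * g y) x
      = lap3 f x * g x + 2 * ∑ j, pd j f x * pd j g x + f x * lap3 g x := by
  have hpd : ∀ j, pd j (fun y => pd j (fun z => f z * g z) y) x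
      = pd j (pd j f) x * g x + 2 * (pd j f x * pd j g x) + f x * pd j (pd j g) x := by
    intro j
    have hfx := hf.differentiableAt two_ne_zero
    have hgx := hg.differentiableAt two_ne_zero
    have hf' := differentiableAt_pd j hf
    have hg' := differentiableAt_pd j hg
    have hev : (fun y => pd j (fun z => f z * g z) y)
        =ᶠ[𝓝 x] fun y => pd j f y * g y + f y * pd j g y := by
      filter_upwards [eventually_differentiableAt_of_contDiffAt_two hf,
        eventually_differentiableAt_of_contDiffAt_two hg] with y hfy hgy using pd_mul j hfy hgy
    rw [pd_congr j hev, pd_add j (hf'.fun_mul hgx) (hfx.fun_mul hg'), pd_mul j hf' hgx,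
      pd_mul j hfx hg']
    ring
  simp only [lap3, hpd, Finset.sum_add_distrib, Finset.sum_mul, Finset.mul_sum]

theorem lap3_comp {φ : ℝ → ℝ} (hφ : ContDiffAt ℝ 2 φ (f x)) (hf : ContDiffAt ℝ 2 f x) :
    lap3 (fun y => φ (f y)) x
      = deriv (deriv φ) (f x) * ∑ j, pd j f x ^ 2 + deriv φ (f x) * lap3 f x := by
  have hfx := hf.differentiableAt two_ne_zero
  have hφ' : DifferentiableAt ℝ (deriv φ) (f x) :=
    (contDiffAt_deriv_of_succ (n := 1) hφ).differentiableAt one_ne_zero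
  have hev : ∀ᶠ y in 𝓝 x, DifferentiableAt ℝ φ (f y) :=
    hfx.continuousAt.eventually
      ((hφ.eventually (by norm_num)).mono fun _ h => h.differentiableAt two_ne_zero)
  have hpd : ∀ j, pd j (fun y => pd j (fun z => φ (f z)) y) x
      = deriv (deriv φ) (f x) * pd j f x ^ 2 + deriv φ (f x) * pd j (pd j f) x := by
    intro j
    have hev' : (fun y => pd j (fun z => φ (f z)) y)
        =ᶠ[𝓝 x] fun y => deriv φ (f y) * pd j f y := by
      filter_upwards [hev, eventually_differentiableAt_of_contDiffAt_two hf] with y hφy hfy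
        using pd_comp j hφy hfy
    rw [pd_congr j hev', pd_mul j (hφ'.fun_comp' x hfx) (differentiableAt_pd j hf),
      pd_comp j hφ' hfx]
    ring
  simp only [lap3, hpd, Finset.sum_add_distrib, Finset.mul_sum]

end PartialDerivatives

/-! ### Functions of the polar angle -/

section PolarAngle

/-- `1 + cos θ` as a function on `ℝ³ ∖ {0}`, with the junk value `1` at the origin. -/
def oneAddCos (x : V3) : ℝ := 1 + x 2 * ‖x‖⁻¹

variable {x : V3}

theorem norm_sq_eq_add (x : V3) : ‖x‖ ^ 2 = x 0 ^ 2 + x 1 ^ 2 + x 2 ^ 2 := by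
  simp [EuclideanSpace.norm_sq_eq, Fin.sum_univ_three]

theorem ne_zero_of_norm_eq_one (hx : ‖x‖ = 1) : x ≠ 0 :=
  norm_ne_zero_iff.1 (hx ▸ one_ne_zero)

theorem contDiffAt_inv_norm {n : WithTop ℕ∞} (hx : x ≠ 0) :
    ContDiffAt ℝ n (fun y : V3 => ‖y‖⁻¹) x :=
  (contDiffAt_norm ℝ hx).inv (norm_ne_zero_iff.2 hx)

theorem pd_inv_norm (j : Fin 3) (hx : x ≠ 0) :
    pd j (fun y => ‖y‖⁻¹) x = -(x j * ‖x‖⁻¹ ^ 3) := by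
  have hn : ‖x‖ ≠ 0 := norm_ne_zero_iff.2 hx
  have hsq : HasFDerivAt (fun y : V3 => ‖y‖ ^ 2) (2 • innerSL ℝ x) x :=
    (hasStrictFDerivAt_norm_sq x).hasFDerivAt
  have hsqrt := (Real.hasDerivAt_sqrt (pow_ne_zero 2 hn)).fun_inv (by positivity)
  have h := pd_comp j hsqrt.differentiableAt hsq.differentiableAt
  simp only [hsqrt.deriv, Real.sqrt_sq (norm_nonneg _)] at h
  have hsq' : pd j (fun y => ‖y‖ ^ 2) x = 2 * x j := by
    simp [pd, hsq.fderiv, e3, EuclideanSpace.inner_single_right]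
  rw [h, hsq']
  field_simp

theorem lap3_inv_norm (hx : x ≠ 0) : lap3 (fun y => ‖y‖⁻¹) x = 0 := by
  have hpd : ∀ j, pd j (fun y => pd j (fun z => ‖z‖⁻¹) y) x
      = 3 * ‖x‖⁻¹ ^ 5 * x j ^ 2 - ‖x‖⁻¹ ^ 3 := by
    intro j
    have hr := (contDiffAt_inv_norm (n := 1) hx).differentiableAt one_ne_zero
    have hev : (fun y => pd j (fun z => ‖z‖⁻¹) y)
        =ᶠ[𝓝 x] fun y => y j * (-1 * ‖y‖⁻¹ ^ 3) := by
      filter_upwards [isOpen_ne.mem_nhds hx] with y hy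
      rw [pd_inv_norm j hy]; ring
    have hderiv : deriv (fun t : ℝ => -1 * t ^ 3) ‖x‖⁻¹ = -(3 * ‖x‖⁻¹ ^ 2) := by simp
    rw [pd_congr j hev, pd_mul j (differentiable_coord j x) (by fun_prop),
      pd_comp (φ := fun t => -1 * t ^ 3) j (by fun_prop) hr, hderiv, pd_coord, if_pos rfl,
      pd_inv_norm j hx]
    ring
  have hn : ‖x‖ ≠ 0 := norm_ne_zero_iff.2 hx
  simp only [lap3, hpd, Fin.sum_univ_three]
  have hsq : x 0 ^ 2 + x 1 ^ 2 + x 2 ^ 2 = ‖x‖ ^ 2 := (norm_sq_eq_add x).symm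
  field_simp
  linear_combination 3 * hsq

theorem contDiffAt_oneAddCos {n : WithTop ℕ∞} (hx : x ≠ 0) : ContDiffAt ℝ n oneAddCos x :=
  contDiffAt_const.add ((contDiff_coord 2).contDiffAt.mul (contDiffAt_inv_norm hx))

theorem oneAddCos_of_norm_eq_one (hx : ‖x‖ = 1) : oneAddCos x = 1 + x 2 := by
  simp [oneAddCos, hx]

theorem pd_oneAddCos (j : Fin 3) (hx : ‖x‖ = 1) :
    pd j oneAddCos x = (if 2 = j then 1 else 0) - x 2 * x j := by
  have hx0 := ne_zero_of_norm_eq_one hx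
  have hr := (contDiffAt_inv_norm (n := 1) hx0).differentiableAt one_ne_zero
  have hmul := pd_mul j (differentiable_coord 2 x) hr
  rw [pd_coord, pd_inv_norm j hx0, hx] at hmul
  have hconst : pd j oneAddCos x = pd j (fun y => y 2 * ‖y‖⁻¹) x := by
    simp [pd, show oneAddCos = fun y => 1 + y 2 * ‖y‖⁻¹ from rfl]
  rw [hconst, hmul]
  ring

theorem lap3_oneAddCos (hx : ‖x‖ = 1) : lap3 oneAddCos x = -2 * x 2 := by
  have hx0 := ne_zero_of_norm_eq_one hx
  rw [show oneAddCos = fun y => 1 + y 2 * ‖y‖⁻¹ from rfl, lap3_const_add,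
    lap3_mul (contDiff_coord 2).contDiffAt (contDiffAt_inv_norm hx0), lap3_coord,
    lap3_inv_norm hx0]
  simp only [pd_coord, pd_inv_norm _ hx0, hx]
  simp

theorem sum_sq_pd_oneAddCos (hx : ‖x‖ = 1) :
    ∑ j, pd j oneAddCos x ^ 2 = oneAddCos x * (2 - oneAddCos x) := by
  have hsq := norm_sq_eq_add x
  rw [hx] at hsq
  simp only [Fin.sum_univ_three, pd_oneAddCos _ hx, oneAddCos_of_norm_eq_one hx]
  simp only [Fin.reduceEq, ↓reduceIte]
  linear_combination -x 2 ^ 2 * hsq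

theorem sum_pd_oneAddCos_mul_pd_inv_norm (hx : ‖x‖ = 1) :
    ∑ j, pd j oneAddCos x * pd j (fun y => ‖y‖⁻¹) x = 0 := by
  have hsq := norm_sq_eq_add x
  rw [hx] at hsq
  simp only [Fin.sum_univ_three, pd_oneAddCos _ hx, pd_inv_norm _ (ne_zero_of_norm_eq_one hx), hx]
  simp only [Fin.reduceEq, ↓reduceIte]
  linear_combination -x 2 * hsq

variable {φ : ℝ → ℝ}

theorem pd_comp_oneAddCos (j : Fin 3) (hx : ‖x‖ = 1)
    (hφ : DifferentiableAt ℝ φ (oneAddCos x)) :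
    pd j (fun y => φ (oneAddCos y)) x
      = deriv φ (oneAddCos x) * ((if 2 = j then 1 else 0) - x 2 * x j) := by
  have hσ := (contDiffAt_oneAddCos (n := 1) (ne_zero_of_norm_eq_one hx)).differentiableAt
    one_ne_zero
  rw [pd_comp j hφ hσ, pd_oneAddCos j hx]

theorem pd_comp_oneAddCos_mul_inv_norm (j : Fin 3) (hx : ‖x‖ = 1)
    (hφ : DifferentiableAt ℝ φ (oneAddCos x)) :
    pd j (fun y => φ (oneAddCos y) * ‖y‖⁻¹) x
      = deriv φ (oneAddCos x) * ((if 2 = j then 1 else 0) - x 2 * x j)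
        - φ (oneAddCos x) * x j := by
  have hx0 := ne_zero_of_norm_eq_one hx
  have hσ := (contDiffAt_oneAddCos (n := 1) hx0).differentiableAt one_ne_zero
  have hinv := (contDiffAt_inv_norm (n := 1) hx0).differentiableAt one_ne_zero
  rw [pd_mul j (hφ.fun_comp' x hσ) hinv,
    pd_comp_oneAddCos j hx hφ, pd_inv_norm j hx0, hx]
  ring

theorem lap3_comp_oneAddCos (hx : ‖x‖ = 1) (hφ : ContDiffAt ℝ 2 φ (oneAddCos x)) :
    lap3 (fun y => φ (oneAddCos y)) x
      = oneAddCos x * (2 - oneAddCos x) * deriv (deriv φ) (oneAddCos x)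
        - 2 * x 2 * deriv φ (oneAddCos x) := by
  rw [lap3_comp hφ (contDiffAt_oneAddCos (ne_zero_of_norm_eq_one hx)), sum_sq_pd_oneAddCos hx,
    lap3_oneAddCos hx]
  ring

theorem lap3_comp_oneAddCos_mul_inv_norm (hx : ‖x‖ = 1)
    (hφ : ContDiffAt ℝ 2 φ (oneAddCos x)) :
    lap3 (fun y => φ (oneAddCos y) * ‖y‖⁻¹) x = lap3 (fun y => φ (oneAddCos y)) x := by
  have hx0 := ne_zero_of_norm_eq_one hx
  have hσ := contDiffAt_oneAddCos (n := 2) hx0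
  have hcross : ∑ j, pd j (fun y => φ (oneAddCos y)) x * pd j (fun y => ‖y‖⁻¹) x = 0 := by
    simp only [pd_comp _ (hφ.differentiableAt two_ne_zero) (hσ.differentiableAt two_ne_zero),
      mul_assoc, ← Finset.mul_sum]
    rw [sum_pd_oneAddCos_mul_pd_inv_norm hx, mul_zero]
  rw [lap3_mul (hφ.fun_comp x hσ) (contDiffAt_inv_norm hx0), hcross, lap3_inv_norm hx0, hx]
  ring

end PolarAngle

/-! ### The Navier–Stokes equations for the moments of the velocity -/

section Moments

/-- The radial moment `x · u(x)`, which equals `u_r` on the unit sphere. -/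
def radialMoment (u : V3 → V3) (x : V3) : ℝ := ∑ i, u x i * x i

/-- The moment of `u` about the `x₃`-axis, which equals `|x'| u_φ` off the axis. -/
def swirlMoment (u : V3 → V3) (x : V3) : ℝ := u x 1 * x 0 - u x 0 * x 1

/-- The polar moment, which equals `|x'| u_θ` on the unit sphere off the axis. -/
def polarMoment (u : V3 → V3) (x : V3) : ℝ := x 2 * radialMoment u x - u x 2

variable {u : V3 → V3} {p : V3 → ℝ} {x : V3}

theorem pd_radialMoment (j : Fin 3) (hu : DifferentiableAt ℝ u x) :
    pd j (radialMoment u) x = ∑ i, pd j (fun z => u z i) x * x i + u x j := by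
  have hu' := differentiableAt_euclidean.1 hu
  unfold radialMoment
  rw [pd_sum j fun i _ => (hu' i).fun_mul (differentiable_coord i x)]
  simp only [pd_mul j (hu' _) (differentiable_coord _ x), pd_coord, Finset.sum_add_distrib]
  simp

theorem pd_swirlMoment (j : Fin 3) (hu : DifferentiableAt ℝ u x) :
    pd j (swirlMoment u) x
      = pd j (fun z => u z 1) x * x 0 - pd j (fun z => u z 0) x * x 1
        + (u x 1 * (if 0 = j then 1 else 0) - u x 0 * (if 1 = j then 1 else 0)) := by
  have hu' := differentiableAt_euclidean.1 hu
  unfold swirlMoment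
  rw [pd_sub j ((hu' 1).fun_mul (differentiable_coord 0 x))
      ((hu' 0).fun_mul (differentiable_coord 1 x)),
    pd_mul j (hu' 1) (differentiable_coord 0 x), pd_mul j (hu' 0) (differentiable_coord 1 x),
    pd_coord, pd_coord]
  ring

theorem lap3_mul_coord {g : V3 → ℝ} (i : Fin 3) (hg : ContDiffAt ℝ 2 g x) :
    lap3 (fun y => g y * y i) x = lap3 g x * x i + 2 * pd i g x := by
  rw [lap3_mul hg (contDiff_coord i).contDiffAt, lap3_coord]
  simp [pd_coord]

theorem lap3_radialMoment (hu : ContDiffAt ℝ 2 u x) :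
    lap3 (radialMoment u) x
      = ∑ i, lap3 (fun z => u z i) x * x i + 2 * ∑ i, pd i (fun z => u z i) x := by
  have hu' := contDiffAt_euclidean.1 hu
  unfold radialMoment
  rw [lap3_sum fun i _ => (hu' i).mul (contDiff_coord i).contDiffAt]
  simp only [lap3_mul_coord _ (hu' _), Finset.sum_add_distrib, Finset.mul_sum]

theorem lap3_swirlMoment (hu : ContDiffAt ℝ 2 u x) :
    lap3 (swirlMoment u) x
      = lap3 (fun z => u z 1) x * x 0 - lap3 (fun z => u z 0) x * x 1
        + 2 * (pd 0 (fun z => u z 1) x - pd 1 (fun z => u z 0) x) := by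
  have hu' := contDiffAt_euclidean.1 hu
  unfold swirlMoment
  rw [lap3_sub ((hu' 1).mul (contDiff_coord 0).contDiffAt)
      ((hu' 0).mul (contDiff_coord 1).contDiffAt),
    lap3_mul_coord 0 (hu' 1), lap3_mul_coord 1 (hu' 0)]
  ring

theorem NSEq.radialMoment_eq (hNS : NSEq u p x) (hu : ContDiffAt ℝ 2 u x) :
    -lap3 (radialMoment u) x + ∑ j, u x j * pd j (radialMoment u) x - ∑ j, u x j ^ 2
      + ∑ j, x j * pd j p x = 0 := by
  obtain ⟨hmom, hdiv⟩ := hNS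
  have h0 := hmom 0
  have h1 := hmom 1
  have h2 := hmom 2
  rw [lap3_radialMoment hu, hdiv]
  simp only [pd_radialMoment _ (hu.differentiableAt two_ne_zero), Fin.sum_univ_three]
    at h0 h1 h2 ⊢
  linear_combination x 0 * h0 + x 1 * h1 + x 2 * h2

theorem NSEq.swirlMoment_eq (hNS : NSEq u p x) (hu : ContDiffAt ℝ 2 u x) :
    -lap3 (swirlMoment u) x + 2 * (pd 0 (fun z => u z 1) x - pd 1 (fun z => u z 0) x)
      + ∑ j, u x j * pd j (swirlMoment u) x + (x 0 * pd 1 p x - x 1 * pd 0 p x) = 0 := by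
  have h0 := hNS.1 0
  have h1 := hNS.1 1
  rw [lap3_swirlMoment hu]
  simp only [pd_swirlMoment _ (hu.differentiableAt two_ne_zero), Fin.sum_univ_three] at h0 h1 ⊢
  simp only [Fin.reduceEq, ↓reduceIte]
  linear_combination x 0 * h1 - x 1 * h0

theorem sq_mul_planar_div (hu : DifferentiableAt ℝ u x) :
    (x 0 ^ 2 + x 1 ^ 2) * (pd 0 (fun z => u z 0) x + pd 1 (fun z => u z 1) x)
      = x 0 * (pd 0 (radialMoment u) x - x 2 * pd 0 (fun z => u z 2) x)
        + x 1 * (pd 1 (radialMoment u) x - x 2 * pd 1 (fun z => u z 2) x)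
        + (x 0 * pd 1 (swirlMoment u) x - x 1 * pd 0 (swirlMoment u) x) := by
  simp only [pd_radialMoment _ hu, pd_swirlMoment _ hu, Fin.sum_univ_three,
    Fin.reduceEq, ↓reduceIte]
  ring

theorem sq_mul_planar_curl (hu : DifferentiableAt ℝ u x) :
    (x 0 ^ 2 + x 1 ^ 2) * (pd 0 (fun z => u z 1) x - pd 1 (fun z => u z 0) x)
      = x 0 * pd 0 (swirlMoment u) x + x 1 * pd 1 (swirlMoment u) x
        - x 0 * (pd 1 (radialMoment u) x - x 2 * pd 1 (fun z => u z 2) x)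
        + x 1 * (pd 0 (radialMoment u) x - x 2 * pd 0 (fun z => u z 2) x) := by
  simp only [pd_radialMoment _ hu, pd_swirlMoment _ hu, Fin.sum_univ_three,
    Fin.reduceEq, ↓reduceIte]
  ring

end Moments

/-! ### Velocity fields with profiles in `1 + cos θ` -/

section Profiles

/-- Near `x`, the moments of the velocity field `u` are those of an axisymmetric
`(-1)`-homogeneous field: `x · u = f(1 + cos θ)`, `|x| u₃ = h(1 + cos θ)` and
`|x'| u_φ = w(1 + cos θ)`. -/
structure HasProfiles (u : V3 → V3) (f h w : ℝ → ℝ) (x : V3) : Prop where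
  contDiffAt_velocity : ContDiffAt ℝ 2 u x
  contDiffAt_radial : ContDiffAt ℝ 2 f (oneAddCos x)
  contDiffAt_axial : ContDiffAt ℝ 2 h (oneAddCos x)
  contDiffAt_swirl : ContDiffAt ℝ 2 w (oneAddCos x)
  radialMoment_eventuallyEq : radialMoment u =ᶠ[𝓝 x] fun z => f (oneAddCos z)
  axial_eventuallyEq : (fun z => u z 2) =ᶠ[𝓝 x] fun z => h (oneAddCos z) * ‖z‖⁻¹
  swirlMoment_eventuallyEq : swirlMoment u =ᶠ[𝓝 x] fun z => w (oneAddCos z)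

namespace HasProfiles

variable {u : V3 → V3} {p : V3 → ℝ} {f h w : ℝ → ℝ} {x : V3}

theorem pd_radialMoment (H : HasProfiles u f h w x) (hx : ‖x‖ = 1) (j : Fin 3) :
    pd j (radialMoment u) x
      = deriv f (oneAddCos x) * ((if 2 = j then 1 else 0) - x 2 * x j) := by
  rw [pd_congr j H.radialMoment_eventuallyEq,
    pd_comp_oneAddCos j hx (H.contDiffAt_radial.differentiableAt two_ne_zero)]

theorem pd_axial (H : HasProfiles u f h w x) (hx : ‖x‖ = 1) (j : Fin 3) :
    pd j (fun z => u z 2) x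
      = deriv h (oneAddCos x) * ((if 2 = j then 1 else 0) - x 2 * x j)
        - h (oneAddCos x) * x j := by
  rw [pd_congr j H.axial_eventuallyEq,
    pd_comp_oneAddCos_mul_inv_norm j hx (H.contDiffAt_axial.differentiableAt two_ne_zero)]

theorem pd_swirlMoment (H : HasProfiles u f h w x) (hx : ‖x‖ = 1) (j : Fin 3) :
    pd j (swirlMoment u) x
      = deriv w (oneAddCos x) * ((if 2 = j then 1 else 0) - x 2 * x j) := by
  rw [pd_congr j H.swirlMoment_eventuallyEq,
    pd_comp_oneAddCos j hx (H.contDiffAt_swirl.differentiableAt two_ne_zero)]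

theorem deriv_axial_eq (H : HasProfiles u f h w x) (hx : ‖x‖ = 1)
    (hax : 0 < x 0 ^ 2 + x 1 ^ 2) (hdiv : ∑ j, pd j (fun z => u z j) x = 0) :
    deriv h (oneAddCos x) = x 2 * deriv f (oneAddCos x) := by
  have hplane := sq_mul_planar_div (H.contDiffAt_velocity.differentiableAt two_ne_zero)
  rw [Fin.sum_univ_three, H.pd_axial hx] at hdiv
  simp only [H.pd_radialMoment hx, H.pd_swirlMoment hx, H.pd_axial hx] at hplane
  simp only [Fin.reduceEq, ↓reduceIte] at hplane hdiv
  refine mul_left_cancel₀ hax.ne' ?_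
  linear_combination (x 0 ^ 2 + x 1 ^ 2) * hdiv - hplane

theorem planar_curl_eq (H : HasProfiles u f h w x) (hx : ‖x‖ = 1)
    (hax : 0 < x 0 ^ 2 + x 1 ^ 2) :
    pd 0 (fun z => u z 1) x - pd 1 (fun z => u z 0) x = -(x 2 * deriv w (oneAddCos x)) := by
  have hplane := sq_mul_planar_curl (H.contDiffAt_velocity.differentiableAt two_ne_zero)
  simp only [H.pd_radialMoment hx, H.pd_swirlMoment hx, H.pd_axial hx] at hplane
  simp only [Fin.reduceEq, ↓reduceIte] at hplane
  refine mul_left_cancel₀ hax.ne' ?_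
  linear_combination hplane

theorem radial_eq (H : HasProfiles u f h w x) (hx : ‖x‖ = 1) (hNS : NSEq u p x) :
    oneAddCos x * (2 - oneAddCos x) * deriv (deriv f) (oneAddCos x)
        - 2 * x 2 * deriv f (oneAddCos x) + polarMoment u x * deriv f (oneAddCos x)
        + ∑ j, u x j ^ 2
      = ∑ j, x j * pd j p x := by
  have hrad := hNS.radialMoment_eq H.contDiffAt_velocity
  rw [lap3_congr H.radialMoment_eventuallyEq, lap3_comp_oneAddCos hx H.contDiffAt_radial] at hrad
  simp only [H.pd_radialMoment hx, Fin.sum_univ_three] at hrad ⊢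
  simp only [Fin.reduceEq, ↓reduceIte] at hrad
  simp only [polarMoment, radialMoment, Fin.sum_univ_three]
  linear_combination -hrad

theorem axial_eq (H : HasProfiles u f h w x) (hx : ‖x‖ = 1) (hNS : NSEq u p x) :
    oneAddCos x * (2 - oneAddCos x) * deriv (deriv h) (oneAddCos x)
        - 2 * x 2 * deriv h (oneAddCos x) + polarMoment u x * deriv h (oneAddCos x)
        + h (oneAddCos x) * radialMoment u x
      = pd 2 p x := by
  have hax := hNS.1 2
  rw [lap3_congr H.axial_eventuallyEq, lap3_comp_oneAddCos_mul_inv_norm hx H.contDiffAt_axial,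
    lap3_comp_oneAddCos hx H.contDiffAt_axial] at hax
  simp only [H.pd_axial hx, Fin.sum_univ_three] at hax
  simp only [Fin.reduceEq, ↓reduceIte] at hax
  simp only [polarMoment, radialMoment, Fin.sum_univ_three]
  linear_combination -hax

theorem swirl_eq (H : HasProfiles u f h w x) (hx : ‖x‖ = 1) (hax : 0 < x 0 ^ 2 + x 1 ^ 2)
    (hNS : NSEq u p x) :
    oneAddCos x * (2 - oneAddCos x) * deriv (deriv w) (oneAddCos x)
        + polarMoment u x * deriv w (oneAddCos x)
      = x 0 * pd 1 p x - x 1 * pd 0 p x := by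
  have hsw := hNS.swirlMoment_eq H.contDiffAt_velocity
  rw [lap3_congr H.swirlMoment_eventuallyEq, lap3_comp_oneAddCos hx H.contDiffAt_swirl,
    H.planar_curl_eq hx hax] at hsw
  simp only [H.pd_swirlMoment hx, Fin.sum_univ_three] at hsw
  simp only [Fin.reduceEq, ↓reduceIte] at hsw
  simp only [polarMoment, radialMoment, Fin.sum_univ_three]
  linear_combination -hsw

end HasProfiles

end Profiles

/-! ### The reduced system of ordinary differential equations -/

/-- The profile of `|x'| u_θ` in `s = 1 + cos θ`, given the profiles `f` of `u_r` and `h` of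
`u₃` on the unit sphere; recall that `cos θ = s - 1`. -/
def polarProfile (f h : ℝ → ℝ) (s : ℝ) : ℝ := (s - 1) * f s - h s

/-- The profile in `s = 1 + cos θ` of the terms of the radial momentum equation on the unit
sphere other than the pressure term `-∂p/∂r = 2 p`. -/
def radialMomentum (f h w : ℝ → ℝ) (s : ℝ) : ℝ :=
  s * (2 - s) * deriv (deriv f) s + 2 * (1 - s) * deriv f s + polarProfile f h s * deriv f s
    + f s ^ 2 + (polarProfile f h s ^ 2 + w s ^ 2) / (s * (2 - s))

/-- The Navier–Stokes system in `s = 1 + cos θ` for the profiles `f`, `h`, `w`, `P` of `u_r`,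
`u₃`, `|x'| u_φ` and `p` on the unit sphere: incompressibility, then the components of the
momentum equation along `e_r`, along the axis and along `e_φ`. -/
structure ProfileSystem (f h w P : ℝ → ℝ) (s : ℝ) : Prop where
  contDiffAt_radial : ContDiffAt ℝ 2 f s
  contDiffAt_axial : ContDiffAt ℝ 2 h s
  contDiffAt_swirl : ContDiffAt ℝ 2 w s
  differentiableAt_pressure : DifferentiableAt ℝ P s
  deriv_axial_eq : deriv h s = (s - 1) * deriv f s
  radial_eq : radialMomentum f h w s + 2 * P s = 0
  axial_eq : s * (2 - s) * deriv (deriv h) s + 2 * (1 - s) * deriv h s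
      + polarProfile f h s * deriv h s + h s * f s
    = s * (2 - s) * deriv P s + 2 * (1 - s) * P s
  swirl_eq : s * (2 - s) * deriv (deriv w) s + polarProfile f h s * deriv w s = 0

theorem hasDerivAt_mul_two_sub (s : ℝ) :
    HasDerivAt (fun t : ℝ => t * (2 - t)) (2 * (1 - s)) s :=
  ((hasDerivAt_id' s).fun_mul ((hasDerivAt_id' s).const_sub 2)).congr_deriv (by ring)

namespace ProfileSystem

variable {f h w P : ℝ → ℝ} {s : ℝ}

theorem hasDerivAt_radial (H : ProfileSystem f h w P s) : HasDerivAt f (deriv f s) s :=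
  (H.contDiffAt_radial.differentiableAt two_ne_zero).hasDerivAt

theorem hasDerivAt_deriv_radial (H : ProfileSystem f h w P s) :
    HasDerivAt (deriv f) (deriv (deriv f) s) s :=
  ((contDiffAt_deriv_of_succ H.contDiffAt_radial).differentiableAt one_ne_zero).hasDerivAt

theorem hasDerivAt_polarProfile (H : ProfileSystem f h w P s) :
    HasDerivAt (polarProfile f h) (f s) s := by
  have hh := (H.contDiffAt_axial.differentiableAt two_ne_zero).hasDerivAt
  rw [H.deriv_axial_eq] at hh
  exact ((((hasDerivAt_id s).sub_const 1).fun_mul H.hasDerivAt_radial).fun_sub hh).congr_deriv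
    (by simp)

theorem contDiffAt_polarProfile (H : ∀ᶠ t in 𝓝 s, ProfileSystem f h w P t) :
    ContDiffAt ℝ 3 (polarProfile f h) s := by
  obtain ⟨v, hv, hvH⟩ := H.exists_mem
  refine (contDiffAt_succ_iff_hasFDerivAt (n := 2)).2
    ⟨fun t => ContinuousLinearMap.toSpanSingleton ℝ (f t),
      ⟨v, hv, fun t ht => (hvH t ht).hasDerivAt_polarProfile.hasFDerivAt⟩, ?_⟩
  exact (ContinuousLinearMap.toSpanSingletonCLE (𝕜 := ℝ)).contDiff.contDiffAt.comp s
    H.self_of_nhds.contDiffAt_radial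

theorem deriv_polarProfile_eventuallyEq (H : ∀ᶠ t in 𝓝 s, ProfileSystem f h w P t) :
    deriv (polarProfile f h) =ᶠ[𝓝 s] f :=
  H.mono fun _ ht => ht.hasDerivAt_polarProfile.deriv

theorem deriv_riccati (H : ∀ᶠ t in 𝓝 s, ProfileSystem f h w P t) :
    deriv (riccati (polarProfile f h)) s
      = s * (2 - s) * deriv f s + (2 + f s) * polarProfile f h s := by
  have hU := H.self_of_nhds.hasDerivAt_polarProfile
  have hlin : HasDerivAt (fun t : ℝ => 2 * (t - 1)) 2 s :=
    (((hasDerivAt_id' s).sub_const 1).const_mul 2).congr_deriv (mul_one 2)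
  have hR := (((hasDerivAt_mul_two_sub s).fun_mul H.self_of_nhds.hasDerivAt_radial).fun_add
    (hlin.fun_mul hU)).fun_add ((hU.fun_pow 2).div_const 2)
  have hric : riccati (polarProfile f h) =ᶠ[𝓝 s] fun t => t * (2 - t) * f t
      + 2 * (t - 1) * polarProfile f h t + polarProfile f h t ^ 2 / 2 := by
    filter_upwards [deriv_polarProfile_eventuallyEq H] with t ht
    rw [riccati, ht]
  rw [hric.deriv_eq, hR.deriv]
  ring

theorem deriv_deriv_riccati (H : ∀ᶠ t in 𝓝 s, ProfileSystem f h w P t) :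
    deriv (deriv (riccati (polarProfile f h))) s
      = 2 * f s - 2 * P s - (polarProfile f h s ^ 2 + w s ^ 2) / (s * (2 - s)) := by
  have hR := ((hasDerivAt_mul_two_sub s).fun_mul H.self_of_nhds.hasDerivAt_deriv_radial).fun_add
    ((H.self_of_nhds.hasDerivAt_radial.const_add 2).fun_mul
      H.self_of_nhds.hasDerivAt_polarProfile)
  have hric : deriv (riccati (polarProfile f h)) =ᶠ[𝓝 s] fun t => t * (2 - t) * deriv f t
      + (2 + f t) * polarProfile f h t :=
    H.eventually_nhds.mono fun _ => deriv_riccati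
  have hrad := H.self_of_nhds.radial_eq
  rw [radialMomentum] at hrad
  rw [hric.deriv_eq, hR.deriv]
  linear_combination hrad

theorem sq_mul_deriv_pressure (H : ∀ᶠ t in 𝓝 s, ProfileSystem f h w P t)
    (hs : s * (2 - s) ≠ 0) :
    (s * (2 - s)) ^ 2 * deriv P s
      = (s * (2 - s)) ^ 2 * deriv f s - s * (2 - s) * (polarProfile f h s * f s)
        + (1 - s) * (polarProfile f h s ^ 2 + w s ^ 2) := by
  have hh : deriv (deriv h) s = deriv f s + (s - 1) * deriv (deriv f) s := by
    have hmul := ((hasDerivAt_id' s).sub_const 1).fun_mul H.self_of_nhds.hasDerivAt_deriv_radial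
    have heq : deriv h =ᶠ[𝓝 s] fun t => (t - 1) * deriv f t := H.mono fun _ ht => ht.deriv_axial_eq
    rw [heq.deriv_eq, hmul.deriv, one_mul]
  have hrad := H.self_of_nhds.radial_eq
  have hax := H.self_of_nhds.axial_eq
  have hpol : polarProfile f h s = (s - 1) * f s - h s := rfl
  rw [radialMomentum] at hrad
  rw [hh, H.self_of_nhds.deriv_axial_eq] at hax
  generalize polarProfile f h s = U at *
  have hquot : s * (2 - s) * ((U ^ 2 + w s ^ 2) / (s * (2 - s))) = U ^ 2 + w s ^ 2 :=
    mul_div_cancel₀ _ hs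
  linear_combination -(s * (2 - s)) * hax - (1 - s) * (s * (2 - s)) * hrad + (1 - s) * hquot
    + s * (2 - s) * f s * hpol

theorem hasDerivAt_deriv_deriv_riccati (H : ∀ᶠ t in 𝓝 s, ProfileSystem f h w P t)
    (hs : s * (2 - s) ≠ 0) :
    HasDerivAt (deriv (deriv (riccati (polarProfile f h))))
      (-2 * w s * deriv w s / (s * (2 - s))) s := by
  have hP := H.self_of_nhds.differentiableAt_pressure.hasDerivAt
  have hw := (H.self_of_nhds.contDiffAt_swirl.differentiableAt two_ne_zero).hasDerivAt
  have hU := H.self_of_nhds.hasDerivAt_polarProfile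
  refine ((((H.self_of_nhds.hasDerivAt_radial.const_mul 2).fun_sub (hP.const_mul 2)).fun_sub
    (((hU.fun_pow 2).fun_add (hw.fun_pow 2)).fun_div (hasDerivAt_mul_two_sub s) hs)).congr_deriv
      ?_).congr_of_eventuallyEq (H.eventually_nhds.mono fun _ => deriv_deriv_riccati)
  have hkey := sq_mul_deriv_pressure H hs
  generalize s * (2 - s) = A at *
  field_simp
  push_cast
  linear_combination -2 * hkey

theorem isSwirlProfile (H : ∀ᶠ t in 𝓝[>] 0, ProfileSystem f h w P t) :
    IsSwirlProfile (polarProfile f h) w where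
  contDiffAt_polar := (eventually_nhdsGT_eventually_nhds H).mono fun _ => contDiffAt_polarProfile
  contDiffAt_swirl := H.mono fun _ ht => ht.contDiffAt_swirl
  swirl_eq := H.mono fun _ ht => ht.swirl_eq
  hasDerivAt_riccati := by
    filter_upwards [eventually_nhdsGT_eventually_nhds H, Ioo_mem_nhdsGT (two_pos (α := ℝ))]
      with s hs hs₂
    exact hasDerivAt_deriv_deriv_riccati hs (mul_pos hs₂.1 (sub_pos.2 hs₂.2)).ne'

end ProfileSystem

/-! ### Geometry of the sphere near the south pole -/

section SouthPole

variable {x : V3} {s ε δ c : ℝ}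

/-- The open cone around the negative `x₃`-axis, without that axis, of the points with
`1 + cos θ < ε`. -/
def southCone (ε : ℝ) : Set V3 := {x | x ≠ 0 ∧ oneAddCos x ∈ Set.Ioo 0 ε}

/-- The point with `1 + cos θ = s` on the meridian `φ = 0` of the unit sphere, for
`0 ≤ s ≤ 2`. -/
def meridian (s : ℝ) : V3 := !₂[√(s * (2 - s)), 0, s - 1]

theorem isOpen_southCone (ε : ℝ) : IsOpen (southCone ε) := by
  have hcont : ContinuousOn oneAddCos {0}ᶜ := fun x hx =>
    (contDiffAt_oneAddCos (n := 0) hx).continuousAt.continuousWithinAt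
  exact hcont.isOpen_inter_preimage isOpen_compl_singleton isOpen_Ioo

theorem southCone_subset (h : ε ≤ δ) : southCone ε ⊆ southCone δ :=
  fun _ hx => ⟨hx.1, hx.2.1, hx.2.2.trans_le h⟩

theorem oneAddCos_smul (hc : 0 < c) (x : V3) : oneAddCos (c • x) = oneAddCos x := by
  simp only [oneAddCos, norm_smul, Real.norm_of_nonneg hc.le, PiLp.smul_apply, smul_eq_mul]
  field_simp

theorem norm_normalize (hx : x ≠ 0) : ‖‖x‖⁻¹ • x‖ = 1 := norm_smul_inv_norm (𝕜 := ℝ) hx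

theorem smul_mem_southCone (hx : x ∈ southCone ε) (hc : 0 < c) : c • x ∈ southCone ε :=
  ⟨smul_ne_zero hc.ne' hx.1, (oneAddCos_smul hc x).symm ▸ hx.2⟩

theorem planar_sq_eq (hx : ‖x‖ = 1) :
    x 0 ^ 2 + x 1 ^ 2 = oneAddCos x * (2 - oneAddCos x) := by
  have hsq := norm_sq_eq_add x
  rw [hx] at hsq
  rw [oneAddCos_of_norm_eq_one hx]
  linear_combination -hsq

theorem norm_sub_S3_sq (hx : ‖x‖ = 1) : ‖x - S3‖ ^ 2 = 2 * oneAddCos x := by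
  have hsq := norm_sq_eq_add x
  rw [hx] at hsq
  rw [oneAddCos_of_norm_eq_one hx, norm_sq_eq_add]
  simp only [S3, PiLp.sub_apply, PiLp.single_apply, Fin.reduceEq, ↓reduceIte]
  linear_combination -hsq

theorem oneAddCos_pos_iff (hx : ‖x‖ = 1) : 0 < oneAddCos x ↔ x ≠ S3 := by
  rw [← sub_ne_zero, ← norm_ne_zero_iff, ← sq_pos_iff, norm_sub_S3_sq hx]
  exact (mul_pos_iff_of_pos_left two_pos).symm

theorem mem_NSCap_iff (hx : ‖x‖ = 1) (hδ : 0 < δ) :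
    x ∈ NSCap δ ↔ oneAddCos x ∈ Set.Ioo 0 (δ ^ 2 / 2) := by
  have hball : x ∈ ball S3 δ ↔ oneAddCos x < δ ^ 2 / 2 := by
    rw [mem_ball_iff_norm, ← pow_lt_pow_iff_left₀ (norm_nonneg _) hδ.le two_ne_zero,
      norm_sub_S3_sq hx, lt_div_iff₀' two_pos]
  simp only [NSCap, sphere2, Set.mem_sdiff, Set.mem_inter_iff, mem_sphere_zero_iff_norm, hx, hball,
    Set.mem_singleton_iff, Set.mem_Ioo, oneAddCos_pos_iff hx, true_and]
  exact and_comm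

theorem cone3_NSCap (hδ : 0 < δ) : cone3 (NSCap δ) = southCone (δ ^ 2 / 2) := by
  ext x
  refine and_congr_right fun hx => ?_
  rw [mem_NSCap_iff (norm_normalize hx) hδ, oneAddCos_smul (inv_pos.2 (norm_pos_iff.2 hx))]

theorem tendsto_oneAddCos_southPole :
    Tendsto oneAddCos (𝓝[sphere2 \ {S3}] S3) (𝓝[>] 0) := by
  have hS : ‖S3‖ = 1 := by simp [S3]
  have h₀ : oneAddCos S3 = 0 := by rw [oneAddCos_of_norm_eq_one hS]; simp [S3]
  have hcont := (contDiffAt_oneAddCos (n := 0) (ne_zero_of_norm_eq_one hS)).continuousAt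
  rw [ContinuousAt, h₀] at hcont
  refine tendsto_nhdsWithin_iff.2 ⟨hcont.mono_left nhdsWithin_le_nhds, ?_⟩
  filter_upwards [self_mem_nhdsWithin] with x hx
  exact (oneAddCos_pos_iff (mem_sphere_zero_iff_norm.1 hx.1)).2 hx.2

theorem meridian_apply_two (s : ℝ) : meridian s 2 = s - 1 := rfl

theorem norm_meridian (hs : s ∈ Set.Icc 0 2) : ‖meridian s‖ = 1 := by
  have hA : 0 ≤ s * (2 - s) := mul_nonneg hs.1 (sub_nonneg.2 hs.2)
  rw [← sq_eq_sq₀ (norm_nonneg _) zero_le_one, norm_sq_eq_add]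
  simp only [meridian, PiLp.toLp_apply, Matrix.cons_val, Real.sq_sqrt hA]
  ring

theorem oneAddCos_meridian (hs : s ∈ Set.Icc 0 2) : oneAddCos (meridian s) = s := by
  rw [oneAddCos_of_norm_eq_one (norm_meridian hs), meridian_apply_two, add_sub_cancel]

theorem meridian_mem_southCone (hε : ε ≤ 2) (hs : s ∈ Set.Ioo 0 ε) : meridian s ∈ southCone ε := by
  have hs₂ : s ∈ Set.Icc 0 2 := ⟨hs.1.le, hs.2.le.trans hε⟩
  exact ⟨ne_zero_of_norm_eq_one (norm_meridian hs₂), (oneAddCos_meridian hs₂).symm ▸ hs⟩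

theorem contDiffAt_meridian {n : WithTop ℕ∞} (hs : s ∈ Set.Ioo 0 2) :
    ContDiffAt ℝ n meridian s := by
  have hA : s * (2 - s) ≠ 0 := (mul_pos hs.1 (sub_pos.2 hs.2)).ne'
  refine contDiffAt_euclidean.2 fun i => ?_
  match i with
  | 0 => exact (contDiffAt_id.mul (contDiffAt_const.sub contDiffAt_id)).sqrt hA
  | 1 => exact contDiffAt_const
  | 2 => exact contDiffAt_id.sub contDiffAt_const

theorem tendsto_meridian : Tendsto meridian (𝓝[>] 0) (𝓝[sphere2 \ {S3}] S3) := by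
  have h₀ : meridian 0 = S3 := by ext i; fin_cases i <;> simp [meridian, S3]
  have hcont : Continuous meridian := by
    refine (PiLp.continuous_toLp 2 _).comp (continuous_pi fun i => ?_)
    match i with
    | 0 => exact (by fun_prop : Continuous fun s : ℝ => √(s * (2 - s)))
    | 1 => exact continuous_const
    | 2 => exact continuous_id.sub continuous_const
  refine tendsto_nhdsWithin_iff.2
    ⟨h₀ ▸ hcont.continuousAt.mono_left nhdsWithin_le_nhds, ?_⟩
  filter_upwards [Ioo_mem_nhdsGT (two_pos (α := ℝ))] with s hs
  have hs₂ := Set.Ioo_subset_Icc_self hs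
  refine ⟨mem_sphere_zero_iff_norm.2 (norm_meridian hs₂), ?_⟩
  rw [Set.mem_singleton_iff, ← ne_eq, ← oneAddCos_pos_iff (norm_meridian hs₂),
    oneAddCos_meridian hs₂]
  exact hs.1

end SouthPole

/-! ### Spherical components -/

section SphericalComponents

variable {u : V3 → V3} {x : V3}

theorem rho_of_norm_eq_one (hx : ‖x‖ = 1) :
    rho x = √(oneAddCos x * (2 - oneAddCos x)) := by
  rw [rho, planar_sq_eq hx]

theorem uRc_eq_radialMoment (u : V3 → V3) (hx : ‖x‖ = 1) : uRc u x = radialMoment u x := by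
  simp [uRc, radialMoment, Fin.sum_univ_three, hx]

theorem rho_mul_uTc_eq_polarMoment (u : V3 → V3) (hx : ‖x‖ = 1) (hax : 0 < x 0 ^ 2 + x 1 ^ 2) :
    rho x * uTc u x = polarMoment u x := by
  have hρ : rho x ≠ 0 := (Real.sqrt_pos.2 hax).ne'
  have hρ₂ : rho x ^ 2 = x 0 ^ 2 + x 1 ^ 2 := Real.sq_sqrt hax.le
  have hsq := norm_sq_eq_add x
  rw [hx] at hsq
  simp only [uTc, polarMoment, radialMoment, Fin.sum_univ_three, hx]
  field_simp
  linear_combination u x 2 * hsq - u x 2 * hρ₂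

theorem rho_mul_uPc_eq_swirlMoment (u : V3 → V3) (hax : 0 < x 0 ^ 2 + x 1 ^ 2) :
    rho x * uPc u x = swirlMoment u x := by
  have hρ : rho x ≠ 0 := (Real.sqrt_pos.2 hax).ne'
  rw [uPc, mul_div_cancel₀ _ hρ, swirlMoment]
  ring

theorem sum_sq_eq_moments (u : V3 → V3) (hx : ‖x‖ = 1) (hax : 0 < x 0 ^ 2 + x 1 ^ 2) :
    ∑ j, u x j ^ 2 = radialMoment u x ^ 2
      + (polarMoment u x ^ 2 + swirlMoment u x ^ 2) / (x 0 ^ 2 + x 1 ^ 2) := by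
  have hsq := norm_sq_eq_add x
  rw [hx] at hsq
  rw [← sub_eq_iff_eq_add', eq_div_iff hax.ne']
  have hpolar : polarMoment u x
      = x 2 * (u x 0 * x 0 + u x 1 * x 1) - u x 2 * (x 0 ^ 2 + x 1 ^ 2) := by
    simp only [polarMoment, radialMoment, Fin.sum_univ_three]
    linear_combination -u x 2 * hsq
  rw [hpolar]
  simp only [swirlMoment, radialMoment, Fin.sum_univ_three]
  linear_combination ((u x 0 * x 0 + u x 1 * x 1) ^ 2 + u x 2 ^ 2 * (x 0 ^ 2 + x 1 ^ 2)) * hsq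

end SphericalComponents

/-! ### Axisymmetric homogeneous solutions -/

section AxisymFlow

variable {u : V3 → V3} {p : V3 → ℝ} {C D : Set V3} {x : V3} {s ε c : ℝ}

theorem sum_mul_pd_of_homogeneous {f : V3 → ℝ} (n : ℕ) (hf : DifferentiableAt ℝ f x)
    (hhom : ∀ c : ℝ, 0 < c → f (c • x) = (c ^ n)⁻¹ * f x) :
    ∑ j, x j * pd j f x = -n * f x := by
  rw [sum_mul_pd_eq_fderiv]
  have hray : HasDerivAt (fun c : ℝ => f (c • x)) (fderiv ℝ f x x) 1 := by
    have hline := (hasDerivAt_id (1 : ℝ)).smul_const x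
    rw [one_smul] at hline
    exact hf.hasFDerivAt.comp_hasDerivAt_of_eq (1 : ℝ) hline (one_smul ℝ x).symm
  have hpow : HasDerivAt (fun c : ℝ => (c ^ n)⁻¹ * f x) (-n * f x) 1 :=
    (((hasDerivAt_pow n (1 : ℝ)).fun_inv (by simp)).mul_const (f x)).congr_deriv (by simp)
  exact hray.unique (hpow.congr_of_eventuallyEq ((lt_mem_nhds one_pos).mono hhom))

/-- `u` is a `C²` axisymmetric `(-1)`-homogeneous solution of the stationary Navier–Stokes
equations on `C`, with `C¹` `(-2)`-homogeneous pressure `p`. -/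
structure IsAxisymFlow (u : V3 → V3) (p : V3 → ℝ) (C : Set V3) : Prop where
  velocity_smul : ∀ x ∈ C, ∀ c : ℝ, 0 < c → u (c • x) = c⁻¹ • u x
  pressure_smul : ∀ x ∈ C, ∀ c : ℝ, 0 < c → p (c • x) = (c ^ 2)⁻¹ * p x
  contDiffOn_velocity : ContDiffOn ℝ 2 u C
  contDiffOn_pressure : ContDiffOn ℝ 1 p C
  axisymOn : AxisymOn u C
  nsEq : ∀ x ∈ C, NSEq u p x

/-- The function of `s = 1 + cos θ` that represents `u_r` on the unit sphere. -/
def radialProfile (u : V3 → V3) (s : ℝ) : ℝ := radialMoment u (meridian s)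

/-- The function of `s = 1 + cos θ` that represents `u₃` on the unit sphere. -/
def axialProfile (u : V3 → V3) (s : ℝ) : ℝ := u (meridian s) 2

/-- The function of `s = 1 + cos θ` that represents `|x'| u_φ`. -/
def swirlProfile (u : V3 → V3) (s : ℝ) : ℝ := swirlMoment u (meridian s)

theorem polarMoment_meridian (u : V3 → V3) (s : ℝ) :
    polarMoment u (meridian s) = polarProfile (radialProfile u) (axialProfile u) s := by
  simp [polarMoment, polarProfile, radialProfile, axialProfile, meridian]

theorem planar_sq_pos (hε : ε ≤ 2) (hx : x ∈ southCone ε) (hn : ‖x‖ = 1) :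
    0 < x 0 ^ 2 + x 1 ^ 2 := by
  rw [planar_sq_eq hn]
  exact mul_pos hx.2.1 (by linarith [hx.2.2])

namespace IsAxisymFlow

theorem mono (F : IsAxisymFlow u p C) (h : D ⊆ C) : IsAxisymFlow u p D where
  velocity_smul x hx := F.velocity_smul x (h hx)
  pressure_smul x hx := F.pressure_smul x (h hx)
  contDiffOn_velocity := F.contDiffOn_velocity.mono h
  contDiffOn_pressure := F.contDiffOn_pressure.mono h
  axisymOn x hx y hy := F.axisymOn x (h hx) y (h hy)
  nsEq x hx := F.nsEq x (h hx)

theorem radialMoment_smul (F : IsAxisymFlow u p C) (hx : x ∈ C) (hc : 0 < c) :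
    radialMoment u (c • x) = radialMoment u x := by
  simp only [radialMoment, F.velocity_smul x hx c hc, PiLp.smul_apply, smul_eq_mul]
  field_simp

theorem swirlMoment_smul (F : IsAxisymFlow u p C) (hx : x ∈ C) (hc : 0 < c) :
    swirlMoment u (c • x) = swirlMoment u x := by
  simp only [swirlMoment, F.velocity_smul x hx c hc, PiLp.smul_apply, smul_eq_mul]
  field_simp

theorem contDiffAt_velocity (F : IsAxisymFlow u p (southCone ε)) (hx : x ∈ southCone ε) :
    ContDiffAt ℝ 2 u x :=
  F.contDiffOn_velocity.contDiffAt ((isOpen_southCone ε).mem_nhds hx)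

theorem differentiableAt_pressure (F : IsAxisymFlow u p (southCone ε)) (hx : x ∈ southCone ε) :
    DifferentiableAt ℝ p x :=
  (F.contDiffOn_pressure.contDiffAt ((isOpen_southCone ε).mem_nhds hx)).differentiableAt
    one_ne_zero

theorem moments_eq_of_norm_eq_one (F : IsAxisymFlow u p (southCone ε)) (hε : ε ≤ 2)
    (hx : x ∈ southCone ε) (hn : ‖x‖ = 1) :
    radialMoment u x = radialProfile u (oneAddCos x) ∧
      polarMoment u x = polarProfile (radialProfile u) (axialProfile u) (oneAddCos x) ∧
      swirlMoment u x = swirlProfile u (oneAddCos x) := by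
  have hm := meridian_mem_southCone hε hx.2
  have hs : oneAddCos x ∈ Set.Icc 0 2 := ⟨hx.2.1.le, hx.2.2.le.trans hε⟩
  have hmn := norm_meridian hs
  have hσ := oneAddCos_meridian hs
  have hx₂ : x 2 = meridian (oneAddCos x) 2 := by
    rw [meridian_apply_two, oneAddCos_of_norm_eq_one hn, add_sub_cancel_left]
  have hρ : rho x = rho (meridian (oneAddCos x)) := by
    rw [rho_of_norm_eq_one hn, rho_of_norm_eq_one hmn, hσ]
  obtain ⟨hr, hθ, hφ⟩ := F.axisymOn x hx _ hm (hn.trans hmn.symm) hx₂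
  refine ⟨?_, ?_, ?_⟩
  · rw [← uRc_eq_radialMoment u hn, hr, uRc_eq_radialMoment u hmn, radialProfile]
  · rw [← rho_mul_uTc_eq_polarMoment u hn (planar_sq_pos hε hx hn), hρ, hθ,
      rho_mul_uTc_eq_polarMoment u hmn (planar_sq_pos hε hm hmn), polarMoment_meridian]
  · rw [← rho_mul_uPc_eq_swirlMoment u (planar_sq_pos hε hx hn), hρ, hφ,
      rho_mul_uPc_eq_swirlMoment u (planar_sq_pos hε hm hmn), swirlProfile]

theorem axial_eq_of_norm_eq_one (F : IsAxisymFlow u p (southCone ε)) (hε : ε ≤ 2)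
    (hx : x ∈ southCone ε) (hn : ‖x‖ = 1) : u x 2 = axialProfile u (oneAddCos x) := by
  obtain ⟨hr, hθ, -⟩ := F.moments_eq_of_norm_eq_one hε hx hn
  rw [polarMoment, polarProfile, hr] at hθ
  have hσ := oneAddCos_of_norm_eq_one hn
  linear_combination -hθ - radialProfile u (oneAddCos x) * hσ

theorem moments_eq (F : IsAxisymFlow u p (southCone ε)) (hε : ε ≤ 2) (hx : x ∈ southCone ε) :
    radialMoment u x = radialProfile u (oneAddCos x) ∧
      u x 2 = axialProfile u (oneAddCos x) * ‖x‖⁻¹ ∧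
      swirlMoment u x = swirlProfile u (oneAddCos x) := by
  have hc : 0 < ‖x‖⁻¹ := inv_pos.2 (norm_pos_iff.2 hx.1)
  have hy := smul_mem_southCone hx hc
  have hn := norm_normalize hx.1
  have hmom := F.moments_eq_of_norm_eq_one hε hy hn
  have hax := F.axial_eq_of_norm_eq_one hε hy hn
  rw [F.radialMoment_smul hx hc, F.swirlMoment_smul hx hc, oneAddCos_smul hc] at hmom
  rw [oneAddCos_smul hc, F.velocity_smul x hx _ hc, inv_inv] at hax
  refine ⟨hmom.1, ?_, hmom.2.2⟩
  rw [← hax, PiLp.smul_apply, smul_eq_mul, mul_right_comm,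
    mul_inv_cancel₀ (norm_ne_zero_iff.2 hx.1), one_mul]

theorem contDiffAt_comp_meridian (F : IsAxisymFlow u p (southCone ε)) (hε : ε ≤ 2)
    (hs : s ∈ Set.Ioo 0 ε) : ContDiffAt ℝ 2 (fun s => u (meridian s)) s :=
  (F.contDiffAt_velocity (meridian_mem_southCone hε hs)).comp s
    (contDiffAt_meridian ⟨hs.1, hs.2.trans_le hε⟩)

theorem hasProfiles (F : IsAxisymFlow u p (southCone ε)) (hε : ε ≤ 2) (hx : x ∈ southCone ε) :
    HasProfiles u (radialProfile u) (axialProfile u) (swirlProfile u) x := by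
  have hum := contDiffAt_euclidean.1 (F.contDiffAt_comp_meridian hε hx.2)
  have hm := contDiffAt_euclidean.1 (contDiffAt_meridian (n := 2) ⟨hx.2.1, hx.2.2.trans_le hε⟩)
  have hnhds := (isOpen_southCone ε).mem_nhds hx
  exact
    { contDiffAt_velocity := F.contDiffAt_velocity hx
      contDiffAt_radial := by
        unfold radialProfile radialMoment
        exact ContDiffAt.sum fun i _ => (hum i).mul (hm i)
      contDiffAt_axial := hum 2
      contDiffAt_swirl := ((hum 1).mul (hm 0)).sub ((hum 0).mul (hm 1))
      radialMoment_eventuallyEq := eventually_of_mem hnhds fun _ hz => (F.moments_eq hε hz).1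
      axial_eventuallyEq := eventually_of_mem hnhds fun _ hz => (F.moments_eq hε hz).2.1
      swirlMoment_eventuallyEq := eventually_of_mem hnhds fun _ hz => (F.moments_eq hε hz).2.2 }

theorem radial_eq (F : IsAxisymFlow u p (southCone ε)) (hε : ε ≤ 2) (hx : x ∈ southCone ε)
    (hn : ‖x‖ = 1) :
    radialMomentum (radialProfile u) (axialProfile u) (swirlProfile u) (oneAddCos x)
      + 2 * p x = 0 := by
  have hrad := (F.hasProfiles hε hx).radial_eq hn (F.nsEq x hx)
  obtain ⟨hr, hθ, hφ⟩ := F.moments_eq_of_norm_eq_one hε hx hn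
  rw [sum_mul_pd_of_homogeneous 2 (F.differentiableAt_pressure hx) (F.pressure_smul x hx),
    sum_sq_eq_moments u hn (planar_sq_pos hε hx hn), planar_sq_eq hn, hr, hθ, hφ] at hrad
  have hσ := oneAddCos_of_norm_eq_one hn
  push_cast at hrad
  rw [radialMomentum]
  linear_combination hrad - 2 * deriv (radialProfile u) (oneAddCos x) * hσ

theorem pressure_eq (F : IsAxisymFlow u p (southCone ε)) (hε : ε ≤ 2) (hx : x ∈ southCone ε) :
    p x = p (meridian (oneAddCos x)) * ‖x‖⁻¹ * ‖x‖⁻¹ := by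
  have hc : 0 < ‖x‖⁻¹ := inv_pos.2 (norm_pos_iff.2 hx.1)
  have hs : oneAddCos x ∈ Set.Icc 0 2 := ⟨hx.2.1.le, hx.2.2.le.trans hε⟩
  have hy := F.radial_eq hε (smul_mem_southCone hx hc) (norm_normalize hx.1)
  have hm := F.radial_eq hε (meridian_mem_southCone hε hx.2) (norm_meridian hs)
  rw [oneAddCos_smul hc] at hy
  rw [oneAddCos_meridian hs] at hm
  have hp : p (‖x‖⁻¹ • x) = p (meridian (oneAddCos x)) := by linear_combination (hy - hm) / 2
  rw [← hp, F.pressure_smul x hx _ hc]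
  field_simp [norm_ne_zero_iff.2 hx.1]

theorem differentiableAt_pressure_meridian (F : IsAxisymFlow u p (southCone ε)) (hε : ε ≤ 2)
    (hs : s ∈ Set.Ioo 0 ε) : DifferentiableAt ℝ (fun s => p (meridian s)) s :=
  (F.differentiableAt_pressure (meridian_mem_southCone hε hs)).comp s
    ((contDiffAt_meridian ⟨hs.1, hs.2.trans_le hε⟩).differentiableAt one_ne_zero)

theorem pd_pressure (F : IsAxisymFlow u p (southCone ε)) (hε : ε ≤ 2) (hx : x ∈ southCone ε)
    (hn : ‖x‖ = 1) (j : Fin 3) :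
    pd j p x = deriv (fun s => p (meridian s)) (oneAddCos x)
        * ((if 2 = j then 1 else 0) - x 2 * x j) - 2 * x j * p (meridian (oneAddCos x)) := by
  have hP := F.differentiableAt_pressure_meridian hε hx.2
  have hσ := (contDiffAt_oneAddCos (n := 1) hx.1).differentiableAt one_ne_zero
  have hinv := (contDiffAt_inv_norm (n := 1) hx.1).differentiableAt one_ne_zero
  have hp : p =ᶠ[𝓝 x] fun z => p (meridian (oneAddCos z)) * ‖z‖⁻¹ * ‖z‖⁻¹ :=
    eventually_of_mem ((isOpen_southCone ε).mem_nhds hx) fun _ => F.pressure_eq hε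
  rw [pd_congr j hp, pd_mul j ((hP.fun_comp' x hσ).fun_mul hinv) hinv,
    pd_comp_oneAddCos_mul_inv_norm j hn hP, pd_inv_norm j hx.1, hn]
  ring

theorem profileSystem (F : IsAxisymFlow u p (southCone ε)) (hε : ε ≤ 2) (hs : s ∈ Set.Ioo 0 ε) :
    ProfileSystem (radialProfile u) (axialProfile u) (swirlProfile u)
      (fun s => p (meridian s)) s := by
  have hs₂ : s ∈ Set.Icc 0 2 := ⟨hs.1.le, hs.2.le.trans hε⟩
  have hx := meridian_mem_southCone hε hs
  have hn := norm_meridian hs₂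
  have hσ := oneAddCos_meridian hs₂
  have hax := planar_sq_pos hε hx hn
  have hNS := F.nsEq _ hx
  have H := F.hasProfiles hε hx
  have hdiv := H.deriv_axial_eq hn hax hNS.2
  have hrad := F.radial_eq hε hx hn
  have haxial := H.axial_eq hn hNS
  have hswirl := H.swirl_eq hn hax hNS
  have hx₀ : meridian s 1 = 0 := rfl
  have hf : radialMoment u (meridian s) = radialProfile u s := rfl
  simp only [polarMoment_meridian, F.pd_pressure hε hx hn, meridian_apply_two, hσ, hx₀, hf,
    Fin.reduceEq, ↓reduceIte] at hdiv hrad haxial hswirl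
  exact
    { contDiffAt_radial := hσ ▸ H.contDiffAt_radial
      contDiffAt_axial := hσ ▸ H.contDiffAt_axial
      contDiffAt_swirl := hσ ▸ H.contDiffAt_swirl
      differentiableAt_pressure := F.differentiableAt_pressure_meridian hε hs
      deriv_axial_eq := hdiv
      radial_eq := hrad
      axial_eq := by linear_combination haxial
      swirl_eq := by linear_combination hswirl }

theorem exists_isSwirlProfile (F : IsAxisymFlow u p (southCone ε)) (hε : ε ≤ 2) (hε₀ : 0 < ε) :
    ∃ U W, IsSwirlProfile U W ∧ ∀ᶠ x in 𝓝[sphere2 \ {S3}] S3,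
      rho x * uTc u x = U (1 + x 2) ∧ uRc u x = deriv U (1 + x 2) ∧
        rho x * uPc u x = W (1 + x 2) := by
  have hsys := fun s hs => F.profileSystem (s := s) hε hs
  refine ⟨_, _, ProfileSystem.isSwirlProfile (eventually_of_mem (Ioo_mem_nhdsGT hε₀) hsys), ?_⟩
  filter_upwards [tendsto_oneAddCos_southPole (Ioo_mem_nhdsGT hε₀), self_mem_nhdsWithin]
    with x hσ hxS
  have hn : ‖x‖ = 1 := mem_sphere_zero_iff_norm.1 hxS.1
  have hx : x ∈ southCone ε := ⟨ne_zero_of_norm_eq_one hn, hσ⟩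
  have hax := planar_sq_pos hε hx hn
  obtain ⟨hr, hθ, hφ⟩ := F.moments_eq_of_norm_eq_one hε hx hn
  rw [← oneAddCos_of_norm_eq_one hn, (hsys _ hσ).hasDerivAt_polarProfile.deriv, ← hr, ← hθ, ← hφ]
  exact ⟨rho_mul_uTc_eq_polarMoment u hn hax, uRc_eq_radialMoment u hn,
    rho_mul_uPc_eq_swirlMoment u hax⟩

end IsAxisymFlow

end AxisymFlow

/-- when `τ ≥ 3`, `|x'| u_φ` is constant and `|x'| u_θ`, `u_r` are real
analytic in `1 + cos θ` near `S`. -/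
theorem expansion_tau_ge_three (δ : ℝ) (hδ : 0 < δ) (u : V3 → V3) (p : V3 → ℝ)
    (hu_hom : ∀ x ∈ cone3 (NSCap δ), ∀ lam : ℝ, 0 < lam → u (lam • x) = lam⁻¹ • u x)
    (hp_hom : ∀ x ∈ cone3 (NSCap δ), ∀ lam : ℝ, 0 < lam → p (lam • x) = (lam ^ 2)⁻¹ * p x)
    (hu_reg : ContDiffOn ℝ 2 u (cone3 (NSCap δ)))
    (hp_reg : ContDiffOn ℝ 1 p (cone3 (NSCap δ)))
    (haxi : AxisymOn u (cone3 (NSCap δ)))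
    (hNS : ∀ x ∈ cone3 (NSCap δ), NSEq u p x)
    (τ : ℝ) (hτ : Tendsto (fun x => rho x * uTc u x) (𝓝[sphere2 \ {S3}] S3) (𝓝 τ))
    (hτ3 : 3 ≤ τ) :
    (∃ c : ℝ, ∀ᶠ x in 𝓝[sphere2 \ {S3}] S3, rho x * uPc u x = c) ∧
    (∃ (g1 g2 : ℝ → ℝ) (r : ℝ), 0 < r ∧
      AnalyticOnNhd ℝ g1 (Metric.ball (0:ℝ) r) ∧
      AnalyticOnNhd ℝ g2 (Metric.ball (0:ℝ) r) ∧
      ∀ᶠ x in 𝓝[sphere2 \ {S3}] S3,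
        rho x * uTc u x = g1 (1 + x 2) ∧ uRc u x = g2 (1 + x 2)) := by
  have F : IsAxisymFlow u p (cone3 (NSCap δ)) := ⟨hu_hom, hp_hom, hu_reg, hp_reg, haxi, hNS⟩
  rw [cone3_NSCap hδ] at F
  obtain ⟨U, W, hUW, hcomp⟩ :=
    (F.mono (southCone_subset (min_le_left _ 2))).exists_isSwirlProfile (min_le_right _ _)
      (lt_min (by positivity) two_pos)
  have hU : Tendsto U (𝓝[>] 0) (𝓝 τ) := by
    refine (hτ.comp tendsto_meridian).congr' <|
      (tendsto_meridian.eventually hcomp).mono fun s hs => ?_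
    rw [Function.comp_apply, hs.1, meridian_apply_two, add_sub_cancel]
  obtain ⟨c, g, hg, hcg⟩ := hUW.exists_eq_const_and_analyticAt hU hτ3
  obtain ⟨r, hr, hgr⟩ := hg.exists_ball_analyticOnNhd
  have hall : ∀ᶠ x in 𝓝[sphere2 \ {S3}] S3, rho x * uPc u x = c ∧
      rho x * uTc u x = g (1 + x 2) ∧ uRc u x = deriv g (1 + x 2) := by
    filter_upwards [tendsto_oneAddCos_southPole.eventually hcg, hcomp, self_mem_nhdsWithin]
      with x hx ⟨hθ, hr, hφ⟩ hxS
    rw [oneAddCos_of_norm_eq_one (mem_sphere_zero_iff_norm.1 hxS.1)] at hx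
    exact ⟨hφ.trans hx.1, hθ.trans hx.2.1, hr.trans hx.2.2⟩
  exact ⟨⟨c, hall.mono fun _ h => h.1⟩, g, deriv g, r, hr, hgr, hgr.deriv,
    hall.mono fun _ h => h.2⟩
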